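/- There exist a Borel vector field v on ℝ² with compact support such that |v| is Lebesgue integrable, and a continuous probability density ϱ on ℝ² that is proportional to the standard Gaussian density ϱ₂(x) = (2π)^{-1}exp(−|x|²/2) outside of some ball, such that the probability measure μ with density ϱ satisfies the Fokker–Planck–Kolmogorov equation L_b^*μ = 0 with b(x) = −x + v(x), the functions |x| and |v(x)| are μ-integrable, but ϱ does not belong to W^{1,1}_loc(ℝ²). -/

import Mathlib

open MeasureTheory Real

noncomputable section

/-- First partial derivative (with respect to the first coordinate) on `ℝ²`. -/
def pd1 (f : ℝ × ℝ → ℝ) (p : ℝ × ℝ) : ℝ := fderiv ℝ f p (1, 0)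

/-- Second partial derivative (with respect to the second coordinate) on `ℝ²`. -/
def pd2 (f : ℝ × ℝ → ℝ) (p : ℝ × ℝ) : ℝ := fderiv ℝ f p (0, 1)

/-- Test functions: smooth compactly supported functions on `ℝ²`. -/
def IsTest (φ : ℝ × ℝ → ℝ) : Prop := ContDiff ℝ (⊤ : ℕ∞) φ ∧ HasCompactSupport φ

/-- Euclidean magnitude of a vector in `ℝ²`. -/
def emag (v : ℝ × ℝ) : ℝ := Real.sqrt (v.1 ^ 2 + v.2 ^ 2)

/-- Density of the standard Gaussian measure on `ℝ²`. -/
def gauss2 (p : ℝ × ℝ) : ℝ := (2 * π)⁻¹ * Real.exp (-(p.1 ^ 2 + p.2 ^ 2) / 2)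

/-- Membership in the Sobolev class `W^{1,1}(ℝ²)`: the function is integrable and possesses
integrable weak first-order partial derivatives. -/
def MemW11 (f : ℝ × ℝ → ℝ) : Prop :=
  Integrable f ∧
    ∃ g₁ g₂ : ℝ × ℝ → ℝ, Integrable g₁ ∧ Integrable g₂ ∧
      (∀ φ : ℝ × ℝ → ℝ, IsTest φ → ∫ p, g₁ p * φ p = - ∫ p, f p * pd1 φ p) ∧
      (∀ φ : ℝ × ℝ → ℝ, IsTest φ → ∫ p, g₂ p * φ p = - ∫ p, f p * pd2 φ p)

/-- Membership in `W^{1,1}_loc(ℝ²)`: `ζ f ∈ W^{1,1}(ℝ²)` for every test function `ζ`. -/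
def MemW11loc (f : ℝ × ℝ → ℝ) : Prop :=
  ∀ ζ : ℝ × ℝ → ℝ, IsTest ζ → MemW11 (fun p => ζ p * f p)

/-!
If `f` is continuous, `F` is integrable, both have compact support and `Δf = ∂₁F` weakly, then
`∫ f = 0`, and `ϱ = gauss2 + f` is stationary for the drift `-x + v`, where `ϱ v = f x + F e₁`:
the Gaussian is stationary for the drift `-x`, and the contributions of `f` to the equation cancel.
After `f` is multiplied by a small constant, `ϱ` is positive, and it is as irregular as `f`.

So it suffices to find such an `f` outside `W^{1,1}_loc`. Otherwise Banach–Steinhaus would bound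
`∫ f ∂₂Φ` by `‖f‖_∞ + ‖F‖₁`, uniformly over test functions `Φ` on a fixed ball with `|Φ| ≤ 1`. Take
`f = ∂₁u` and `F = Δu`. By Ornstein's non-inequality `‖∂₁∂₂u‖₁` is not controlled by `‖Δu‖₁`, as
truncations of `log |x|` show. Replacing `u` by `N²` disjoint copies rescaled by `1 / N` makes
`∂₁u` small without affecting these two quantities, which contradicts the uniform bound.
-/

open Function Metric Set
open scoped Topology

/-! ### Test functions -/

/-- The Laplacian `∂₁∂₁ f + ∂₂∂₂ f` on `ℝ²`, written with the same partial derivatives as the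
Fokker–Planck–Kolmogorov equation. -/
def lap (f : ℝ × ℝ → ℝ) (p : ℝ × ℝ) : ℝ := pd1 (pd1 f) p + pd2 (pd2 f) p

section PartialDerivatives

variable {f g φ : ℝ × ℝ → ℝ} {p : ℝ × ℝ}

lemma pd1_eq_of_hasDerivAt {d : ℝ} (hf : DifferentiableAt ℝ f p)
    (h : HasDerivAt (fun x => f (x, p.2)) d p.1) : pd1 f p = d :=
  (hf.hasFDerivAt.comp_hasDerivAt p.1
    ((hasDerivAt_id p.1).prodMk (hasDerivAt_const p.1 p.2))).unique h

lemma pd2_eq_of_hasDerivAt {d : ℝ} (hf : DifferentiableAt ℝ f p)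
    (h : HasDerivAt (fun y => f (p.1, y)) d p.2) : pd2 f p = d :=
  (hf.hasFDerivAt.comp_hasDerivAt p.2
    ((hasDerivAt_const p.2 p.1).prodMk (hasDerivAt_id p.2))).unique h

lemma contDiff_pd1 {n : WithTop ℕ∞} (hf : ContDiff ℝ (n + 1) f) : ContDiff ℝ n (pd1 f) :=
  (hf.fderiv_right le_rfl).clm_apply contDiff_const

lemma contDiff_pd2 {n : WithTop ℕ∞} (hf : ContDiff ℝ (n + 1) f) : ContDiff ℝ n (pd2 f) :=
  (hf.fderiv_right le_rfl).clm_apply contDiff_const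

lemma fderiv_apply_eq (f : ℝ × ℝ → ℝ) (p w : ℝ × ℝ) :
    fderiv ℝ f p w = w.1 * pd1 f p + w.2 * pd2 f p := by
  have hw : w = w.1 • ((1, 0) : ℝ × ℝ) + w.2 • ((0, 1) : ℝ × ℝ) := by ext <;> simp
  conv_lhs => rw [hw, map_add, map_smul, map_smul]
  rfl

lemma pd2_pd1_comm (hf : ContDiff ℝ 2 f) (p : ℝ × ℝ) : pd2 (pd1 f) p = pd1 (pd2 f) p := by
  have hf' : DifferentiableAt ℝ (fderiv ℝ f) p :=
    (hf.fderiv_right (m := 1) le_rfl).differentiable one_ne_zero p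
  have second_derivative (a b : ℝ × ℝ) :
      fderiv ℝ (fun q => fderiv ℝ f q a) p b = fderiv ℝ (fderiv ℝ f) p b a := by
    rw [fderiv_clm_apply hf' (differentiableAt_const a)]
    simp
  have hsymm : IsSymmSndFDerivAt ℝ f p := hf.contDiffAt.isSymmSndFDerivAt (by simp)
  calc pd2 (pd1 f) p = fderiv ℝ (fderiv ℝ f) p (0, 1) (1, 0) := second_derivative _ _
    _ = fderiv ℝ (fderiv ℝ f) p (1, 0) (0, 1) := hsymm _ _
    _ = pd1 (pd2 f) p := (second_derivative _ _).symm

lemma pd1_eventuallyEq (h : f =ᶠ[𝓝 p] g) : pd1 f =ᶠ[𝓝 p] pd1 g :=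
  h.fderiv.fun_comp fun l : ℝ × ℝ →L[ℝ] ℝ => l (1, 0)

lemma pd2_eventuallyEq (h : f =ᶠ[𝓝 p] g) : pd2 f =ᶠ[𝓝 p] pd2 g :=
  h.fderiv.fun_comp fun l : ℝ × ℝ →L[ℝ] ℝ => l (0, 1)

lemma lap_eq_of_eventuallyEq (h : f =ᶠ[𝓝 p] g) : lap f p = lap g p :=
  congrArg₂ (· + ·) (pd1_eventuallyEq (pd1_eventuallyEq h)).eq_of_nhds
    (pd2_eventuallyEq (pd2_eventuallyEq h)).eq_of_nhds

lemma pd1_const_mul (c : ℝ) (f : ℝ × ℝ → ℝ) : pd1 (fun p => c * f p) = fun p => c * pd1 f p := by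
  funext p
  exact congrArg (fun l : ℝ × ℝ →L[ℝ] ℝ => l (1, 0)) (congrFun (fderiv_const_smul_field c) p)

lemma pd2_const_mul (c : ℝ) (f : ℝ × ℝ → ℝ) : pd2 (fun p => c * f p) = fun p => c * pd2 f p := by
  funext p
  exact congrArg (fun l : ℝ × ℝ →L[ℝ] ℝ => l (0, 1)) (congrFun (fderiv_const_smul_field c) p)

lemma lap_const_mul (c : ℝ) (f : ℝ × ℝ → ℝ) : lap (fun p => c * f p) = fun p => c * lap f p := by
  funext p
  simp only [lap, pd1_const_mul, pd2_const_mul, mul_add]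

lemma pd1_mul (hf : Differentiable ℝ f) (hg : Differentiable ℝ g) :
    pd1 (fun p => f p * g p) = fun p => pd1 f p * g p + f p * pd1 g p := by
  funext p
  simp only [pd1, fderiv_fun_mul (hf p) (hg p), add_apply, smul_apply,
    smul_eq_mul]
  ring

lemma pd2_mul (hf : Differentiable ℝ f) (hg : Differentiable ℝ g) :
    pd2 (fun p => f p * g p) = fun p => pd2 f p * g p + f p * pd2 g p := by
  funext p
  simp only [pd2, fderiv_fun_mul (hf p) (hg p), add_apply, smul_apply,
    smul_eq_mul]
  ring

lemma pd1_add (hf : Differentiable ℝ f) (hg : Differentiable ℝ g) :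
    pd1 (fun p => f p + g p) = fun p => pd1 f p + pd1 g p := by
  funext p
  simp only [pd1, fderiv_fun_add (hf p) (hg p), add_apply]

lemma pd2_add (hf : Differentiable ℝ f) (hg : Differentiable ℝ g) :
    pd2 (fun p => f p + g p) = fun p => pd2 f p + pd2 g p := by
  funext p
  simp only [pd2, fderiv_fun_add (hf p) (hg p), add_apply]

lemma lap_mul (hf : ContDiff ℝ 2 f) (hg : ContDiff ℝ 2 g) (p : ℝ × ℝ) :
    lap (fun p => f p * g p) p =
      lap f p * g p + 2 * (pd1 f p * pd1 g p + pd2 f p * pd2 g p) + f p * lap g p := by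
  have df := hf.differentiable two_ne_zero
  have dg := hg.differentiable two_ne_zero
  have d1f := (contDiff_pd1 (n := 1) hf).differentiable one_ne_zero
  have d1g := (contDiff_pd1 (n := 1) hg).differentiable one_ne_zero
  have d2f := (contDiff_pd2 (n := 1) hf).differentiable one_ne_zero
  have d2g := (contDiff_pd2 (n := 1) hg).differentiable one_ne_zero
  simp only [lap, pd1_mul df dg, pd2_mul df dg, pd1_add (d1f.fun_mul dg) (df.fun_mul d1g),
    pd2_add (d2f.fun_mul dg) (df.fun_mul d2g), pd1_mul d1f dg, pd1_mul df d1g, pd2_mul d2f dg,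
    pd2_mul df d2g]
  ring

lemma support_fderiv_apply_subset {s : Set (ℝ × ℝ)} (hs : IsClosed s) (hf : support f ⊆ s)
    (w : ℝ × ℝ) : support (fun p => fderiv ℝ f p w) ⊆ s :=
  (subset_tsupport _).trans ((tsupport_fderiv_apply_subset ℝ w).trans (closure_minimal hf hs))

lemma support_lap_subset {s : Set (ℝ × ℝ)} (hs : IsClosed s) (hf : support f ⊆ s) :
    support (lap f) ⊆ s :=
  (support_add _ _).trans (union_subset
    (support_fderiv_apply_subset hs (support_fderiv_apply_subset hs hf _) _)
    (support_fderiv_apply_subset hs (support_fderiv_apply_subset hs hf _) _))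

end PartialDerivatives

section TestFunctions

variable {f φ u : ℝ × ℝ → ℝ}

lemma IsTest.contDiff_two (h : IsTest φ) : ContDiff ℝ 2 φ := mod_cast contDiff_infty.1 h.1 2

lemma IsTest.contDiff_one (h : IsTest φ) : ContDiff ℝ 1 φ := mod_cast contDiff_infty.1 h.1 1

lemma IsTest.continuous (h : IsTest φ) : Continuous φ := h.1.continuous

lemma IsTest.differentiable (h : IsTest φ) : Differentiable ℝ φ := h.1.differentiable (by simp)

lemma IsTest.integrable (h : IsTest φ) : Integrable φ :=
  h.continuous.integrable_of_hasCompactSupport h.2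

lemma IsTest.exists_abs_le (h : IsTest φ) : ∃ C, ∀ p, |φ p| ≤ C :=
  h.2.exists_bound_of_continuous h.continuous

lemma IsTest.mul_contDiff (h : IsTest φ) (hf : ContDiff ℝ (⊤ : ℕ∞) f) :
    IsTest (fun p => φ p * f p) :=
  ⟨h.1.mul hf, h.2.mul_right⟩

lemma IsTest.const_mul (h : IsTest φ) (c : ℝ) : IsTest (fun p => c * φ p) :=
  ⟨contDiff_const.mul h.1, h.2.mul_left⟩

lemma isTest_fderiv_apply (h : IsTest φ) (w : ℝ × ℝ) : IsTest (fun p => fderiv ℝ φ p w) :=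
  ⟨(h.1.fderiv_right (m := (⊤ : ℕ∞)) (by simp)).clm_apply contDiff_const, h.2.fderiv_apply ℝ w⟩

lemma isTest_pd1 (h : IsTest φ) : IsTest (pd1 φ) := isTest_fderiv_apply h _

lemma isTest_pd2 (h : IsTest φ) : IsTest (pd2 φ) := isTest_fderiv_apply h _

lemma isTest_lap (h : IsTest φ) : IsTest (lap φ) :=
  have h₁ := isTest_pd1 (isTest_pd1 h)
  have h₂ := isTest_pd2 (isTest_pd2 h)
  ⟨h₁.1.add h₂.1, h₁.2.add h₂.2⟩

lemma exists_isTest_eq_one {r R : ℝ} (hr : 0 < r) (hrR : r < R) :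
    ∃ ζ : ℝ × ℝ → ℝ, IsTest ζ ∧ (∀ p, 0 ≤ ζ p) ∧ (∀ p, ζ p ≤ 1) ∧ (∀ p ∈ closedBall 0 r, ζ p = 1) ∧
      support ζ ⊆ closedBall 0 R := by
  let b : ContDiffBump (0 : ℝ × ℝ) := ⟨r, R, hr, hrR⟩
  exact ⟨b, ⟨b.contDiff, b.hasCompactSupport⟩, fun _ => b.nonneg, fun _ => b.le_one,
    fun _ => b.one_of_mem_closedBall, b.support_eq.subset.trans ball_subset_closedBall⟩

lemma IsTest.integrable_continuous_mul (h : IsTest φ) (hf : Continuous f) :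
    Integrable (fun p => f p * φ p) :=
  (hf.mul h.continuous).integrable_of_hasCompactSupport h.2.mul_left

lemma IsTest.integrable_mul (h : IsTest φ) (hf : Integrable f) : Integrable (fun p => f p * φ p) :=
  have ⟨_, hC⟩ := h.exists_abs_le
  hf.mul_bdd h.continuous.aestronglyMeasurable (.of_forall hC)

lemma integral_mul_fderiv_apply_eq_neg (hf : ContDiff ℝ 1 f) (h : IsTest φ) (w : ℝ × ℝ) :
    ∫ p, f p * fderiv ℝ φ p w = -∫ p, fderiv ℝ f p w * φ p :=
  integral_mul_fderiv_eq_neg_fderiv_mul_of_integrable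
    (h.integrable_continuous_mul ((hf.continuous_fderiv one_ne_zero).clm_apply continuous_const))
    ((isTest_fderiv_apply h w).integrable_continuous_mul hf.continuous)
    (h.integrable_continuous_mul hf.continuous)
    (fun p _ => hf.differentiable one_ne_zero p) (fun p _ => h.differentiable p)

lemma integral_mul_pd1_eq_neg (hf : ContDiff ℝ 1 f) (h : IsTest φ) :
    ∫ p, f p * pd1 φ p = -∫ p, pd1 f p * φ p :=
  integral_mul_fderiv_apply_eq_neg hf h _

lemma integral_mul_pd2_eq_neg (hf : ContDiff ℝ 1 f) (h : IsTest φ) :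
    ∫ p, f p * pd2 φ p = -∫ p, pd2 f p * φ p :=
  integral_mul_fderiv_apply_eq_neg hf h _

lemma integral_mul_lap_eq_neg_gradient (hf : ContDiff ℝ 1 f) (h : IsTest φ) :
    ∫ p, f p * lap φ p = -∫ p, (pd1 f p * pd1 φ p + pd2 f p * pd2 φ p) := by
  have h₁ := isTest_pd1 h
  have h₂ := isTest_pd2 h
  have hf₁ : Continuous (pd1 f) := (contDiff_pd1 (n := 0) hf).continuous
  have hf₂ : Continuous (pd2 f) := (contDiff_pd2 (n := 0) hf).continuous
  simp only [lap, mul_add]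
  rw [integral_add ((isTest_pd1 h₁).integrable_continuous_mul hf.continuous)
      ((isTest_pd2 h₂).integrable_continuous_mul hf.continuous),
    integral_add (h₁.integrable_continuous_mul hf₁) (h₂.integrable_continuous_mul hf₂),
    integral_mul_pd1_eq_neg hf h₁, integral_mul_pd2_eq_neg hf h₂, neg_add]

lemma integral_pd1_mul_lap (hu : IsTest u) (h : IsTest φ) :
    ∫ p, pd1 u p * lap φ p = -∫ p, lap u p * pd1 φ p := by
  have hu₁ := isTest_pd1 hu
  have hu₂ := isTest_pd2 hu
  have h₁ := isTest_pd1 h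
  have h₂ := isTest_pd2 h
  have swap : ∫ p, pd2 (pd1 u) p * pd2 φ p = ∫ p, pd2 (pd2 u) p * pd1 φ p :=
    calc ∫ p, pd2 (pd1 u) p * pd2 φ p
        = ∫ p, pd1 (pd2 u) p * pd2 φ p := by simp only [pd2_pd1_comm hu.contDiff_two]
      _ = -∫ p, pd2 u p * pd1 (pd2 φ) p := by
          rw [integral_mul_pd1_eq_neg hu₂.contDiff_one h₂, neg_neg]
      _ = -∫ p, pd2 u p * pd2 (pd1 φ) p := by simp only [pd2_pd1_comm h.contDiff_two]
      _ = ∫ p, pd2 (pd2 u) p * pd1 φ p := by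
          rw [integral_mul_pd2_eq_neg hu₂.contDiff_one h₁, neg_neg]
  rw [integral_mul_lap_eq_neg_gradient hu₁.contDiff_one h]
  simp only [lap, add_mul]
  rw [integral_add (h₁.integrable_mul (isTest_pd1 hu₁).integrable)
      (h₂.integrable_mul (isTest_pd2 hu₁).integrable), swap,
    ← integral_add (h₁.integrable_mul (isTest_pd1 hu₁).integrable)
      (h₁.integrable_mul (isTest_pd2 hu₂).integrable)]

end TestFunctions

/-! ### Rescaled lattice sums -/

/-- The points of the lattice `3ℤ²` with nonnegative coordinates; unit balls of the sup norm around
them are disjoint. -/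
def latticePoint (k : ℕ × ℕ) : ℝ × ℝ := (3 * k.1, 3 * k.2)

/-- The sum of `N²` copies of `g`, shrunk by the factor `N` and placed on a lattice of mesh `3 / N`.
It keeps the integral and the supremum of a function supported in the unit ball, while each
derivative costs a factor `N`. -/
def latticeSum (N : ℕ) (g : ℝ × ℝ → ℝ) (z : ℝ × ℝ) : ℝ :=
  ∑ k ∈ Finset.range N ×ˢ Finset.range N, g ((N : ℝ) • z - latticePoint k)

section LatticeSum

variable {N : ℕ} {f g : ℝ × ℝ → ℝ}

lemma eq_of_norm_sub_latticePoint_le {k l : ℕ × ℕ} {z : ℝ × ℝ} (hk : ‖z - latticePoint k‖ ≤ 1)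
    (hl : ‖z - latticePoint l‖ ≤ 1) : k = l := by
  have separated {m n : ℕ} {x : ℝ} (hm : |x - 3 * m| ≤ 1) (hn : |x - 3 * n| ≤ 1) : m = n := by
    rw [abs_le] at hm hn
    have hmn : (m : ℝ) < n + 1 := by linarith
    have hnm : (n : ℝ) < m + 1 := by linarith
    norm_cast at hmn hnm
    lia
  rw [norm_prod_le_iff] at hk hl
  exact Prod.ext (separated hk.1 hl.1) (separated hk.2 hl.2)

lemma eq_zero_of_one_lt_norm (hg : support g ⊆ closedBall 0 1) {z : ℝ × ℝ} (hz : 1 < ‖z‖) :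
    g z = 0 :=
  notMem_support.1 fun h => hz.not_ge (mem_closedBall_zero_iff.1 (hg h))

/- The copies in a lattice sum have disjoint supports, so at each point at most one of them is
nonzero, and which one it is does not depend on the function. -/
lemma exists_latticeSum_eq (N : ℕ) (z : ℝ × ℝ) :
    ∃ w, ∀ g : ℝ × ℝ → ℝ, support g ⊆ closedBall 0 1 → latticeSum N g z = g w := by
  by_cases h : ∃ k ∈ Finset.range N ×ˢ Finset.range N, ‖(N : ℝ) • z - latticePoint k‖ ≤ 1
  · obtain ⟨k, hkN, hk⟩ := h
    refine ⟨(N : ℝ) • z - latticePoint k, fun g hg => Finset.sum_eq_single_of_mem k hkN ?_⟩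
    intro l _ hlk
    refine eq_zero_of_one_lt_norm hg (not_le.1 fun hl => hlk ?_)
    exact eq_of_norm_sub_latticePoint_le hl hk
  · push Not at h
    have outside : (1 : ℝ) < ‖((2, 0) : ℝ × ℝ)‖ := by simp [Prod.norm_def]
    refine ⟨(2, 0), fun g hg => ?_⟩
    rw [eq_zero_of_one_lt_norm hg outside]
    exact Finset.sum_eq_zero fun k hk => eq_zero_of_one_lt_norm hg (h k hk)

lemma support_latticeSum_subset (hN : N ≠ 0) (hg : support g ⊆ closedBall 0 1) :
    support (latticeSum N g) ⊆ closedBall 0 4 := by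
  intro z hz
  obtain ⟨k, hkN, hk⟩ := Finset.exists_ne_zero_of_sum_ne_zero hz
  have hN' : (1 : ℝ) ≤ N := by exact_mod_cast Nat.one_le_iff_ne_zero.2 hN
  have hlattice : ‖latticePoint k‖ ≤ 3 * N := by
    simp only [Finset.mem_product, Finset.mem_range] at hkN
    rw [norm_prod_le_iff]
    constructor <;> simp [latticePoint, hkN.1.le, hkN.2.le]
  have hscaled : N * ‖z‖ ≤ 1 + 3 * N :=
    calc N * ‖z‖ = ‖(N : ℝ) • z‖ := by rw [norm_smul, RCLike.norm_natCast]
      _ = ‖((N : ℝ) • z - latticePoint k) + latticePoint k‖ := by rw [sub_add_cancel]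
      _ ≤ 1 + 3 * N := norm_add_le_of_le (mem_closedBall_zero_iff.1 (hg hk)) hlattice
  rw [mem_closedBall_zero_iff]
  by_contra! hfar
  nlinarith

lemma abs_latticeSum_le (hg : support g ⊆ closedBall 0 1) {C : ℝ} (hC : ∀ p, |g p| ≤ C)
    (z : ℝ × ℝ) : |latticeSum N g z| ≤ C := by
  obtain ⟨w, hw⟩ := exists_latticeSum_eq N z
  rw [hw g hg]
  exact hC w

lemma latticeSum_mul_latticeSum (hf : support f ⊆ closedBall 0 1) (hg : support g ⊆ closedBall 0 1)
    (z : ℝ × ℝ) : latticeSum N f z * latticeSum N g z = latticeSum N (fun p => f p * g p) z := by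
  obtain ⟨w, hw⟩ := exists_latticeSum_eq N z
  rw [hw f hf, hw g hg, hw _ ((support_mul_subset_left f g).trans hf)]

lemma abs_latticeSum (hg : support g ⊆ closedBall 0 1) (z : ℝ × ℝ) :
    |latticeSum N g z| = latticeSum N (fun p => |g p|) z := by
  obtain ⟨w, hw⟩ := exists_latticeSum_eq N z
  rw [hw g hg, hw _ (show support (fun p => |g p|) ⊆ _ by simpa using hg)]

lemma integral_latticeSum (hN : N ≠ 0) (hg : Integrable g) :
    ∫ z, latticeSum N g z = ∫ z, g z := by
  have hN' : (N : ℝ) ≠ 0 := Nat.cast_ne_zero.2 hN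
  have copy (k : ℕ × ℕ) :
      ∫ z, g ((N : ℝ) • z - latticePoint k) = ((N : ℝ) ^ 2)⁻¹ * ∫ z, g z := by
    rw [Measure.integral_comp_smul volume (fun w => g (w - latticePoint k)) (N : ℝ),
      integral_sub_right_eq_self]
    simp
  unfold latticeSum
  rw [integral_finsetSum _ fun k _ => (hg.comp_sub_right (latticePoint k)).comp_smul hN']
  simp only [copy, Finset.sum_const, Finset.card_product, Finset.card_range, nsmul_eq_mul,
    Nat.cast_mul]
  field_simp

lemma isTest_latticeSum (hN : N ≠ 0) (h : IsTest g) (hg : support g ⊆ closedBall 0 1) :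
    IsTest (latticeSum N g) :=
  ⟨ContDiff.sum fun _ _ => h.1.comp (by fun_prop),
    .of_support_subset_isCompact (isCompact_closedBall 0 4) (support_latticeSum_subset hN hg)⟩

lemma fderiv_latticeSum_apply (hg : Differentiable ℝ g) (z w : ℝ × ℝ) :
    fderiv ℝ (latticeSum N g) z w = N * latticeSum N (fun p => fderiv ℝ g p w) z := by
  have copy (k : ℕ × ℕ) : HasFDerivAt (fun z : ℝ × ℝ => g ((N : ℝ) • z - latticePoint k))
      ((fderiv ℝ g ((N : ℝ) • z - latticePoint k)).comp
        ((N : ℝ) • ContinuousLinearMap.id ℝ (ℝ × ℝ))) z :=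
    (hg _).hasFDerivAt.comp z (((hasFDerivAt_id z).const_smul (N : ℝ)).sub_const _)
  have total : fderiv ℝ (latticeSum N g) z = _ :=
    (HasFDerivAt.fun_sum (u := Finset.range N ×ˢ Finset.range N) fun k _ => copy k).fderiv
  rw [total]
  simp [latticeSum, Finset.mul_sum]

lemma pd1_latticeSum (hg : Differentiable ℝ g) :
    pd1 (latticeSum N g) = fun z => N * latticeSum N (pd1 g) z :=
  funext fun z => fderiv_latticeSum_apply hg z _

lemma pd2_latticeSum (hg : Differentiable ℝ g) :
    pd2 (latticeSum N g) = fun z => N * latticeSum N (pd2 g) z :=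
  funext fun z => fderiv_latticeSum_apply hg z _

lemma lap_latticeSum (hg : IsTest g) :
    lap (latticeSum N g) = fun z => (N : ℝ) ^ 2 * latticeSum N (lap g) z := by
  funext z
  have split : latticeSum N (lap g) z =
      latticeSum N (pd1 (pd1 g)) z + latticeSum N (pd2 (pd2 g)) z := Finset.sum_add_distrib
  rw [split]
  simp only [lap, pd1_latticeSum hg.differentiable, pd2_latticeSum hg.differentiable,
    pd1_const_mul, pd2_const_mul, pd1_latticeSum (isTest_pd1 hg).differentiable,
    pd2_latticeSum (isTest_pd2 hg).differentiable]
  ring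

end LatticeSum

/-- Many small copies of `u` have a small gradient, while `‖Δu‖₁` and the pairing
`∫ ∂₁u ∂₂φ` are invariant under the rescaling. -/
lemma exists_isTest_abs_pd1_le_one {u φ : ℝ × ℝ → ℝ} (hu : IsTest u) (hφ : IsTest φ)
    (su : support u ⊆ closedBall 0 1) (sφ : support φ ⊆ closedBall 0 1) (bφ : ∀ p, |φ p| ≤ 1) :
    ∃ U Φ : ℝ × ℝ → ℝ, IsTest U ∧ IsTest Φ ∧
      support U ⊆ closedBall 0 4 ∧ support Φ ⊆ closedBall 0 4 ∧
      (∀ p, |pd1 U p| ≤ 1) ∧ (∀ p, |Φ p| ≤ 1) ∧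
      ∫ p, |lap U p| = ∫ p, |lap u p| ∧
      ∫ p, pd1 U p * pd2 Φ p = ∫ p, pd1 u p * pd2 φ p := by
  obtain ⟨C, hC⟩ := (isTest_pd1 hu).exists_abs_le
  obtain ⟨N, hN⟩ := exists_nat_gt (max C 0)
  have hNpos : (0 : ℝ) < N := (le_max_right _ _).trans_lt hN
  have hN0 : N ≠ 0 := by exact_mod_cast hNpos.ne'
  have s₁u : support (pd1 u) ⊆ closedBall 0 1 :=
    support_fderiv_apply_subset isClosed_closedBall su _
  have s₂φ : support (pd2 φ) ⊆ closedBall 0 1 :=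
    support_fderiv_apply_subset isClosed_closedBall sφ _
  have slap : support (lap u) ⊆ closedBall 0 1 := support_lap_subset isClosed_closedBall su
  let U : ℝ × ℝ → ℝ := fun z => ((N : ℝ) ^ 2)⁻¹ * latticeSum N u z
  have pd1_U : pd1 U = fun z => (N : ℝ)⁻¹ * latticeSum N (pd1 u) z := by
    simp only [U, pd1_const_mul, pd1_latticeSum hu.differentiable]
    field_simp
  have lap_U : lap U = latticeSum N (lap u) := by
    simp only [U, lap_const_mul, lap_latticeSum hu]
    field_simp
  have pd2_Φ : pd2 (latticeSum N φ) = fun z => N * latticeSum N (pd2 φ) z :=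
    pd2_latticeSum hφ.differentiable
  refine ⟨U, latticeSum N φ, (isTest_latticeSum hN0 hu su).const_mul _,
    isTest_latticeSum hN0 hφ sφ,
    (support_mul_subset_right _ _).trans (support_latticeSum_subset hN0 su),
    support_latticeSum_subset hN0 sφ, fun z => ?_, abs_latticeSum_le sφ bφ, ?_, ?_⟩
  · calc |pd1 U z| = (N : ℝ)⁻¹ * |latticeSum N (pd1 u) z| := by
          rw [pd1_U, abs_mul, abs_of_pos (inv_pos.2 hNpos)]
      _ ≤ (N : ℝ)⁻¹ * N := by
          gcongr
          exact (abs_latticeSum_le s₁u hC z).trans ((le_max_left _ _).trans hN.le)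
      _ = 1 := inv_mul_cancel₀ hNpos.ne'
  · simp only [lap_U, abs_latticeSum slap]
    exact integral_latticeSum hN0 (isTest_lap hu).integrable.abs
  · have product (z : ℝ × ℝ) : pd1 U z * pd2 (latticeSum N φ) z =
        latticeSum N (fun p => pd1 u p * pd2 φ p) z := by
      rw [pd1_U, pd2_Φ, ← latticeSum_mul_latticeSum s₁u s₂φ]
      field_simp
    simp only [product]
    exact integral_latticeSum hN0 ((isTest_pd2 hφ).integrable_mul (isTest_pd1 hu).integrable)

/-! ### The regularised logarithm -/

/-- The square of the Euclidean norm; the norm `‖p‖` of `ℝ × ℝ` is the sup norm. -/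
def sqNorm (p : ℝ × ℝ) : ℝ := p.1 ^ 2 + p.2 ^ 2

/-- The smooth approximation `log (|p|² + δ²)` of a multiple of the fundamental solution of the
Laplace equation. -/
def regLog (δ : ℝ) (p : ℝ × ℝ) : ℝ := log (sqNorm p + δ ^ 2)

section RegLog

variable {δ : ℝ} {p : ℝ × ℝ}

lemma sqNorm_nonneg (p : ℝ × ℝ) : 0 ≤ sqNorm p := by unfold sqNorm; positivity

lemma sqNorm_add_sq_pos (hδ : 0 < δ) (p : ℝ × ℝ) : 0 < sqNorm p + δ ^ 2 :=
  add_pos_of_nonneg_of_pos (sqNorm_nonneg p) (pow_pos hδ 2)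

lemma abs_mul_le_sqNorm (p : ℝ × ℝ) : |p.1 * p.2| ≤ sqNorm p := by
  rw [sqNorm, abs_le]
  constructor <;> nlinarith [sq_nonneg (p.1 + p.2), sq_nonneg (p.1 - p.2)]

lemma contDiff_sqNorm {n : WithTop ℕ∞} : ContDiff ℝ n sqNorm := by unfold sqNorm; fun_prop

lemma contDiff_regLog (hδ : 0 < δ) {n : WithTop ℕ∞} : ContDiff ℝ n (regLog δ) :=
  (contDiff_sqNorm.add contDiff_const).log fun p => (sqNorm_add_sq_pos hδ p).ne'

lemma hasDerivAt_sqNorm_add_fst (δ x y : ℝ) :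
    HasDerivAt (fun x => sqNorm (x, y) + δ ^ 2) (2 * x) x := by
  simpa [sqNorm] using (((hasDerivAt_id x).pow 2).add_const (y ^ 2)).add_const (δ ^ 2)

lemma hasDerivAt_sqNorm_add_snd (δ x y : ℝ) :
    HasDerivAt (fun y => sqNorm (x, y) + δ ^ 2) (2 * y) y := by
  simpa [sqNorm] using (((hasDerivAt_id y).pow 2).const_add (x ^ 2)).add_const (δ ^ 2)

lemma pd1_regLog (hδ : 0 < δ) : pd1 (regLog δ) = fun p => 2 * p.1 / (sqNorm p + δ ^ 2) :=
  funext fun p => pd1_eq_of_hasDerivAt ((contDiff_regLog hδ).differentiable one_ne_zero p)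
    ((hasDerivAt_sqNorm_add_fst δ p.1 p.2).log (sqNorm_add_sq_pos hδ p).ne')

lemma pd2_regLog (hδ : 0 < δ) : pd2 (regLog δ) = fun p => 2 * p.2 / (sqNorm p + δ ^ 2) :=
  funext fun p => pd2_eq_of_hasDerivAt ((contDiff_regLog hδ).differentiable one_ne_zero p)
    ((hasDerivAt_sqNorm_add_snd δ p.1 p.2).log (sqNorm_add_sq_pos hδ p).ne')

lemma differentiable_pd1_regLog (hδ : 0 < δ) : Differentiable ℝ (pd1 (regLog δ)) :=
  (contDiff_pd1 (n := 1) (contDiff_regLog hδ)).differentiable one_ne_zero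

lemma differentiable_pd2_regLog (hδ : 0 < δ) : Differentiable ℝ (pd2 (regLog δ)) :=
  (contDiff_pd2 (n := 1) (contDiff_regLog hδ)).differentiable one_ne_zero

lemma pd2_pd1_regLog (hδ : 0 < δ) (p : ℝ × ℝ) :
    pd2 (pd1 (regLog δ)) p = -4 * (p.1 * p.2) / (sqNorm p + δ ^ 2) ^ 2 := by
  refine pd2_eq_of_hasDerivAt (differentiable_pd1_regLog hδ p) ?_
  rw [pd1_regLog hδ]
  refine ((hasDerivAt_const p.2 (2 * p.1)).fun_div (hasDerivAt_sqNorm_add_snd δ p.1 p.2)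
    (sqNorm_add_sq_pos hδ p).ne').congr_deriv ?_
  ring

lemma lap_regLog (hδ : 0 < δ) (p : ℝ × ℝ) :
    lap (regLog δ) p = 4 * δ ^ 2 / (sqNorm p + δ ^ 2) ^ 2 := by
  have hne := (sqNorm_add_sq_pos hδ p).ne'
  have h₁ : pd1 (pd1 (regLog δ)) p =
      (2 * (sqNorm p + δ ^ 2) - 2 * p.1 * (2 * p.1)) / (sqNorm p + δ ^ 2) ^ 2 := by
    refine pd1_eq_of_hasDerivAt (differentiable_pd1_regLog hδ p) ?_
    rw [pd1_regLog hδ]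
    simpa using ((hasDerivAt_id p.1).const_mul 2).fun_div
      (hasDerivAt_sqNorm_add_fst δ p.1 p.2) hne
  have h₂ : pd2 (pd2 (regLog δ)) p =
      (2 * (sqNorm p + δ ^ 2) - 2 * p.2 * (2 * p.2)) / (sqNorm p + δ ^ 2) ^ 2 := by
    refine pd2_eq_of_hasDerivAt (differentiable_pd2_regLog hδ p) ?_
    rw [pd2_regLog hδ]
    simpa using ((hasDerivAt_id p.2).const_mul 2).fun_div
      (hasDerivAt_sqNorm_add_snd δ p.1 p.2) hne
  rw [lap, h₁, h₂, ← add_div]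
  congr 1
  unfold sqNorm
  ring

/- Up to a constant, `Δ regLog δ` is dominated by the product of two Cauchy densities with
scale `δ`. -/
lemma lap_regLog_le_cauchyPDFReal (hδ : 0 < δ) (p : ℝ × ℝ) :
    lap (regLog δ) p ≤ 4 * π ^ 2 *
      (ProbabilityTheory.cauchyPDFReal 0 δ.toNNReal p.1 *
        ProbabilityTheory.cauchyPDFReal 0 δ.toNNReal p.2) := by
  have factors : (p.1 ^ 2 + δ ^ 2) * (p.2 ^ 2 + δ ^ 2) ≤ (sqNorm p + δ ^ 2) ^ 2 := by
    unfold sqNorm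
    nlinarith [sq_nonneg (p.1 ^ 2), sq_nonneg (p.2 ^ 2), mul_nonneg (sq_nonneg p.1) (sq_nonneg p.2),
      mul_nonneg (sq_nonneg p.1) (sq_nonneg δ), mul_nonneg (sq_nonneg p.2) (sq_nonneg δ)]
  calc lap (regLog δ) p = 4 * δ ^ 2 / (sqNorm p + δ ^ 2) ^ 2 := lap_regLog hδ p
    _ ≤ 4 * δ ^ 2 / ((p.1 ^ 2 + δ ^ 2) * (p.2 ^ 2 + δ ^ 2)) := by gcongr
    _ = _ := by
      simp only [ProbabilityTheory.cauchyPDFReal_def, coe_toNNReal _ hδ.le, sub_zero]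
      field_simp

lemma lap_regLog_nonneg (hδ : 0 < δ) (p : ℝ × ℝ) : 0 ≤ lap (regLog δ) p := by
  rw [lap_regLog hδ]
  positivity

lemma integrable_cauchyPDFReal_prod (δ : ℝ) :
    Integrable fun p : ℝ × ℝ => 4 * π ^ 2 *
      (ProbabilityTheory.cauchyPDFReal 0 δ.toNNReal p.1 *
        ProbabilityTheory.cauchyPDFReal 0 δ.toNNReal p.2) :=
  (Integrable.mul_prod (ProbabilityTheory.integrable_cauchyPDFReal 0)
    (ProbabilityTheory.integrable_cauchyPDFReal 0)).const_mul _

lemma integrable_lap_regLog (hδ : 0 < δ) : Integrable (lap (regLog δ)) := by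
  have hcont : Continuous (lap (regLog δ)) := by
    have hpos := fun p => (sqNorm_add_sq_pos hδ p).ne'
    rw [funext (lap_regLog hδ)]
    exact continuous_const.div
      (((contDiff_sqNorm (n := 0)).continuous.add continuous_const).pow 2)
      fun p => pow_ne_zero 2 (hpos p)
  refine (integrable_cauchyPDFReal_prod δ).mono' hcont.aestronglyMeasurable (.of_forall fun p => ?_)
  rw [norm_of_nonneg (lap_regLog_nonneg hδ p)]
  exact lap_regLog_le_cauchyPDFReal hδ p

lemma integral_lap_regLog_le (hδ : 0 < δ) : ∫ p, lap (regLog δ) p ≤ 4 * π ^ 2 := by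
  refine (integral_mono (integrable_lap_regLog hδ) (integrable_cauchyPDFReal_prod δ)
    (lap_regLog_le_cauchyPDFReal hδ)).trans_eq ?_
  rw [integral_const_mul, Measure.volume_eq_prod, integral_prod_mul,
    ProbabilityTheory.integral_cauchyPDFReal_eq_one 0 (toNNReal_pos.2 hδ).ne', mul_one, mul_one]

lemma sqNorm_mem_Icc (hp : p ∈ closedBall (0 : ℝ × ℝ) 1 \ ball 0 (1 / 2)) :
    sqNorm p ∈ Icc (1 / 4) 2 := by
  obtain ⟨hle, hge⟩ := hp
  rw [mem_closedBall_zero_iff, norm_prod_le_iff, norm_eq_abs, norm_eq_abs,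
    ← sq_le_one_iff_abs_le_one, ← sq_le_one_iff_abs_le_one] at hle
  rw [mem_ball_zero_iff, not_lt, Prod.norm_def, le_max_iff, norm_eq_abs, norm_eq_abs] at hge
  refine ⟨?_, by unfold sqNorm; linarith [hle.1, hle.2]⟩
  unfold sqNorm
  rcases hge with h | h
  · nlinarith [sq_abs p.1, sq_nonneg p.2]
  · nlinarith [sq_abs p.2, sq_nonneg p.1]

lemma abs_regLog_le (hδ : 0 < δ) (hδ1 : δ ≤ 1)
    (hp : p ∈ closedBall (0 : ℝ × ℝ) 1 \ ball 0 (1 / 2)) : |regLog δ p| ≤ 3 := by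
  obtain ⟨hlow, hup⟩ := sqNorm_mem_Icc hp
  have hpos := sqNorm_add_sq_pos hδ p
  have hinv : (sqNorm p + δ ^ 2)⁻¹ ≤ 4 := inv_le_of_inv_le₀ (by norm_num) (by nlinarith)
  rw [regLog, abs_le]
  constructor
  · linarith [one_sub_inv_le_log_of_pos hpos]
  · nlinarith [log_le_sub_one_of_pos hpos]

lemma abs_pd_regLog_le (hδ : 0 < δ) (hp : p ∈ closedBall (0 : ℝ × ℝ) 1 \ ball 0 (1 / 2)) :
    |pd1 (regLog δ) p| ≤ 8 ∧ |pd2 (regLog δ) p| ≤ 8 := by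
  have hlow : 1 / 4 ≤ sqNorm p + δ ^ 2 := by linarith [(sqNorm_mem_Icc hp).1, sq_nonneg δ]
  have quotient_le {x : ℝ} (hx : ‖x‖ ≤ 1) : |2 * x / (sqNorm p + δ ^ 2)| ≤ 8 := by
    rw [norm_eq_abs] at hx
    rw [abs_div, abs_mul, abs_two, abs_of_pos (sqNorm_add_sq_pos hδ p),
      div_le_iff₀ (sqNorm_add_sq_pos hδ p)]
    linarith
  have hle := norm_prod_le_iff.1 (mem_closedBall_zero_iff.1 hp.1)
  rw [pd1_regLog hδ, pd2_regLog hδ]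
  exact ⟨quotient_le hle.1, quotient_le hle.2⟩

end RegLog

/-! ### Truncated logarithms -/

section Truncation

variable {δ : ℝ} {ζ θ : ℝ × ℝ → ℝ}

lemma abs_mul_le_of_support_subset {α : Type*} {a b : α → ℝ} {s : Set α} {C : ℝ}
    (ha : support a ⊆ s) (hb : ∀ x ∈ s, |b x| ≤ C) (x : α) : |a x * b x| ≤ C * |a x| := by
  by_cases hx : a x = 0
  · simp [hx]
  · rw [abs_mul, mul_comm]
    gcongr
    exact hb x (ha hx)

lemma support_fderiv_apply_subset_diff {r R : ℝ} (hone : ∀ p ∈ closedBall 0 r, ζ p = 1)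
    (hsupp : support ζ ⊆ closedBall 0 R) (w : ℝ × ℝ) :
    support (fun p => fderiv ℝ ζ p w) ⊆ closedBall 0 R \ ball 0 r := by
  refine subset_sdiff.2 ⟨support_fderiv_apply_subset isClosed_closedBall hsupp w,
    disjoint_right.2 fun p hp hne => hne ?_⟩
  have hloc : ζ =ᶠ[nhds p] fun _ => 1 :=
    Filter.eventuallyEq_of_mem (isOpen_ball.mem_nhds hp) fun q hq =>
      hone q (ball_subset_closedBall hq)
  simp [hloc.fderiv_eq]

lemma support_lap_subset_diff {r R : ℝ} (hone : ∀ p ∈ closedBall 0 r, ζ p = 1)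
    (hsupp : support ζ ⊆ closedBall 0 R) : support (lap ζ) ⊆ closedBall 0 R \ ball 0 r := by
  have hclosed : IsClosed (closedBall (0 : ℝ × ℝ) R \ ball 0 r) :=
    isClosed_closedBall.sdiff isOpen_ball
  exact (support_add _ _).trans (union_subset
    (support_fderiv_apply_subset hclosed (support_fderiv_apply_subset_diff hone hsupp _) _)
    (support_fderiv_apply_subset hclosed (support_fderiv_apply_subset_diff hone hsupp _) _))

lemma abs_lap_mul_regLog_le (hζ : IsTest ζ) (hζ0 : ∀ p, 0 ≤ ζ p) (hζ1 : ∀ p, ζ p ≤ 1)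
    (hone : ∀ p ∈ closedBall 0 (1 / 2), ζ p = 1) (hsupp : support ζ ⊆ closedBall 0 1)
    (hδ : 0 < δ) (hδ1 : δ ≤ 1) (p : ℝ × ℝ) :
    |lap (fun p => ζ p * regLog δ p) p| ≤
      3 * |lap ζ p| + 16 * |pd1 ζ p| + 16 * |pd2 ζ p| + lap (regLog δ) p := by
  have h₀ : |lap ζ p * regLog δ p| ≤ 3 * |lap ζ p| :=
    abs_mul_le_of_support_subset (support_lap_subset_diff hone hsupp)
      (fun _ => abs_regLog_le hδ hδ1) p
  have h₁ : |pd1 ζ p * pd1 (regLog δ) p| ≤ 8 * |pd1 ζ p| :=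
    abs_mul_le_of_support_subset (support_fderiv_apply_subset_diff hone hsupp _)
      (fun _ hq => (abs_pd_regLog_le hδ hq).1) p
  have h₂ : |pd2 ζ p * pd2 (regLog δ) p| ≤ 8 * |pd2 ζ p| :=
    abs_mul_le_of_support_subset (support_fderiv_apply_subset_diff hone hsupp _)
      (fun _ hq => (abs_pd_regLog_le hδ hq).2) p
  have h₃ : |ζ p * lap (regLog δ) p| ≤ lap (regLog δ) p := by
    have hnonneg := lap_regLog_nonneg hδ p
    rw [abs_of_nonneg (mul_nonneg (hζ0 p) hnonneg)]
    exact mul_le_of_le_one_left hnonneg (hζ1 p)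
  rw [lap_mul hζ.contDiff_two (contDiff_regLog hδ)]
  rw [abs_le] at h₀ h₁ h₂ h₃ ⊢
  constructor <;> linarith

lemma integral_abs_lap_mul_regLog_le (hζ : IsTest ζ) (hζ0 : ∀ p, 0 ≤ ζ p) (hζ1 : ∀ p, ζ p ≤ 1)
    (hone : ∀ p ∈ closedBall 0 (1 / 2), ζ p = 1) (hsupp : support ζ ⊆ closedBall 0 1)
    (hδ : 0 < δ) (hδ1 : δ ≤ 1) :
    ∫ p, |lap (fun p => ζ p * regLog δ p) p| ≤
      (∫ p, (3 * |lap ζ p| + 16 * |pd1 ζ p| + 16 * |pd2 ζ p|)) + 4 * π ^ 2 := by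
  have hcut : Integrable fun p => 3 * |lap ζ p| + 16 * |pd1 ζ p| + 16 * |pd2 ζ p| :=
    (((isTest_lap hζ).integrable.abs.const_mul 3).add
      ((isTest_pd1 hζ).integrable.abs.const_mul 16)).add
      ((isTest_pd2 hζ).integrable.abs.const_mul 16)
  have htest : IsTest fun p => ζ p * regLog δ p := hζ.mul_contDiff (contDiff_regLog hδ)
  calc ∫ p, |lap (fun p => ζ p * regLog δ p) p|
      ≤ ∫ p, (3 * |lap ζ p| + 16 * |pd1 ζ p| + 16 * |pd2 ζ p| + lap (regLog δ) p) :=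
        integral_mono (isTest_lap htest).integrable.abs (hcut.add (integrable_lap_regLog hδ))
          (abs_lap_mul_regLog_le hζ hζ0 hζ1 hone hsupp hδ hδ1)
    _ = (∫ p, (3 * |lap ζ p| + 16 * |pd1 ζ p| + 16 * |pd2 ζ p|)) + ∫ p, lap (regLog δ) p :=
        integral_add hcut (integrable_lap_regLog hδ)
    _ ≤ _ := by gcongr; exact integral_lap_regLog_le hδ

end Truncation

/-- The bounded function `x₁ x₂ / (|p|² + δ²)`; up to the unbounded factor `-4 / (|p|² + δ²)` it is
the mixed second derivative of `regLog δ`. -/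
def saddle (δ : ℝ) (p : ℝ × ℝ) : ℝ := p.1 * p.2 / (sqNorm p + δ ^ 2)

/-- The squares `(2^{-l-3}, 2^{-l-2}]²`, which shrink to the origin inside the first quadrant. -/
def dyadicBox (l : ℕ) : Set (ℝ × ℝ) :=
  Ioc ((1 / 2 : ℝ) ^ (l + 3)) ((1 / 2 : ℝ) ^ (l + 2)) ×ˢ
    Ioc ((1 / 2 : ℝ) ^ (l + 3)) ((1 / 2 : ℝ) ^ (l + 2))

section Saddle

variable {δ : ℝ} {ζ θ : ℝ × ℝ → ℝ} {p : ℝ × ℝ} {l : ℕ}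

lemma contDiff_saddle (hδ : 0 < δ) {n : WithTop ℕ∞} : ContDiff ℝ n (saddle δ) :=
  (contDiff_fst.mul contDiff_snd).div (contDiff_sqNorm.add contDiff_const)
    fun p => (sqNorm_add_sq_pos hδ p).ne'

lemma abs_saddle_le_one (hδ : 0 < δ) (p : ℝ × ℝ) : |saddle δ p| ≤ 1 := by
  have hpos := sqNorm_add_sq_pos hδ p
  rw [saddle, abs_div, abs_of_pos hpos, div_le_one hpos]
  linarith [abs_mul_le_sqNorm p, sq_nonneg δ]

lemma measurableSet_dyadicBox (l : ℕ) : MeasurableSet (dyadicBox l) :=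
  measurableSet_Ioc.prod measurableSet_Ioc

lemma pairwise_disjoint_dyadicBox : Pairwise (Disjoint on dyadicBox) := fun l m hlm =>
  have hanti : Antitone fun l : ℕ => (1 / 2 : ℝ) ^ (l + 2) := fun _ _ h =>
    pow_le_pow_of_le_one (by norm_num) (by norm_num) (by lia)
  disjoint_prod.2 (.inl (hanti.pairwise_disjoint_on_Ioc_succ hlm))

lemma volume_real_dyadicBox (l : ℕ) : volume.real (dyadicBox l) = ((1 / 2 : ℝ) ^ (l + 3)) ^ 2 := by
  have hside : volume.real (Ioc ((1 / 2 : ℝ) ^ (l + 3)) ((1 / 2 : ℝ) ^ (l + 2))) =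
      (1 / 2 : ℝ) ^ (l + 3) := by
    rw [volume_real_Ioc_of_le (pow_le_pow_of_le_one (by norm_num) (by norm_num) (by lia))]
    ring
  rw [dyadicBox, Measure.volume_eq_prod, measureReal_prod_prod, hside, sq]

lemma volume_dyadicBox_ne_top (l : ℕ) : volume (dyadicBox l) ≠ ⊤ := by
  rw [dyadicBox, Measure.volume_eq_prod, Measure.prod_prod, volume_Ioc]
  exact ENNReal.mul_ne_top ENNReal.ofReal_ne_top ENNReal.ofReal_ne_top

lemma dyadicBox_subset_closedBall (l : ℕ) : dyadicBox l ⊆ closedBall 0 (1 / 4) := by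
  have hle : (1 / 2 : ℝ) ^ (l + 2) ≤ 1 / 4 :=
    (pow_le_pow_of_le_one (by norm_num) (by norm_num) (Nat.le_add_left 2 l)).trans_eq (by norm_num)
  have hpos : (0 : ℝ) < (1 / 2) ^ (l + 3) := by positivity
  rintro p ⟨⟨hx, hx'⟩, hy, hy'⟩
  rw [mem_closedBall_zero_iff, norm_prod_le_iff, norm_of_nonneg (hpos.trans hx).le,
    norm_of_nonneg (hpos.trans hy).le]
  exact ⟨hx'.trans hle, hy'.trans hle⟩

lemma le_saddle_sq_of_mem_dyadicBox (hδ : 0 < δ) (hδl : δ ≤ (1 / 2) ^ (l + 3))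
    (hp : p ∈ dyadicBox l) :
    4 / 729 / ((1 / 2) ^ (l + 3)) ^ 2 ≤ 4 * saddle δ p ^ 2 / (sqNorm p + δ ^ 2) := by
  have hdouble : (1 / 2 : ℝ) ^ (l + 2) = 2 * (1 / 2) ^ (l + 3) := by ring
  have ha : (0 : ℝ) < (1 / 2) ^ (l + 3) := by positivity
  obtain ⟨⟨hx, hx'⟩, hy, hy'⟩ := hp
  rw [hdouble] at hx' hy'
  generalize (1 / 2 : ℝ) ^ (l + 3) = a at *
  have hsize : sqNorm p + δ ^ 2 ≤ 9 * a ^ 2 := by unfold sqNorm; nlinarith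
  have hproduct : a ^ 2 ≤ p.1 * p.2 := by nlinarith
  have hpos := sqNorm_add_sq_pos hδ p
  have hsaddle : 1 / 9 ≤ saddle δ p := by
    rw [saddle, le_div_iff₀ hpos]
    linarith
  calc 4 / 729 / a ^ 2 = 4 * (1 / 9) ^ 2 / (9 * a ^ 2) := by field_simp; norm_num
    _ ≤ 4 * saddle δ p ^ 2 / (sqNorm p + δ ^ 2) := by gcongr

/- Each of the first `n` dyadic boxes contributes the same amount: the integrand is of the order of
the inverse square of the side length there. -/
lemma mul_le_integral_saddle_sq (hδ : 0 < δ) {n : ℕ} (hδn : δ ≤ (1 / 2) ^ (n + 3)) (hθ : IsTest θ)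
    (hθ0 : ∀ p, 0 ≤ θ p) (hone : ∀ p ∈ closedBall 0 (1 / 4), θ p = 1) :
    (n : ℝ) * (4 / 729) ≤ ∫ p, 4 * saddle δ p ^ 2 / (sqNorm p + δ ^ 2) * θ p := by
  let F : ℝ × ℝ → ℝ := fun p => 4 * saddle δ p ^ 2 / (sqNorm p + δ ^ 2) * θ p
  have hF0 (p : ℝ × ℝ) : 0 ≤ F p := by
    have := sqNorm_add_sq_pos hδ p
    have := hθ0 p
    positivity
  have hF : Integrable F := by
    refine hθ.integrable_continuous_mul (Continuous.div ?_ ?_ fun p => (sqNorm_add_sq_pos hδ p).ne')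
    · exact continuous_const.mul ((contDiff_saddle hδ (n := 0)).continuous.pow 2)
    · exact (contDiff_sqNorm (n := 0)).continuous.add continuous_const
  have box {l : ℕ} (hl : l < n) : 4 / 729 ≤ ∫ p in dyadicBox l, F p := by
    have hδl : δ ≤ (1 / 2) ^ (l + 3) :=
      hδn.trans (pow_le_pow_of_le_one (by norm_num) (by norm_num) (by lia))
    calc 4 / 729 = 4 / 729 / ((1 / 2) ^ (l + 3)) ^ 2 * volume.real (dyadicBox l) := by
          rw [volume_real_dyadicBox]
          field_simp
      _ ≤ ∫ p in dyadicBox l, F p := by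
          refine setIntegral_ge_of_const_le_real (measurableSet_dyadicBox l)
            (volume_dyadicBox_ne_top l) (fun p hp => ?_) hF.integrableOn
          simp only [F, hone p (dyadicBox_subset_closedBall l hp), mul_one]
          exact le_saddle_sq_of_mem_dyadicBox hδ hδl hp
  calc n * (4 / 729) = ∑ _l ∈ Finset.range n, (4 / 729 : ℝ) := by simp
    _ ≤ ∑ l ∈ Finset.range n, ∫ p in dyadicBox l, F p :=
        Finset.sum_le_sum fun l hl => box (Finset.mem_range.1 hl)
    _ = ∫ p in ⋃ l ∈ Finset.range n, dyadicBox l, F p :=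
        (integral_biUnion_finset _ (fun l _ => measurableSet_dyadicBox l)
          (fun _ _ _ _ h => pairwise_disjoint_dyadicBox h) fun _ _ => hF.integrableOn).symm
    _ ≤ ∫ p, F p := setIntegral_le_integral hF (.of_forall hF0)

lemma integral_pd1_regLog_mul_pd2_saddle (hδ : 0 < δ) (hζ : IsTest ζ) (hθ : IsTest θ)
    (hone : ∀ p ∈ closedBall 0 (1 / 2), ζ p = 1) (hsupp : support θ ⊆ ball 0 (1 / 2)) :
    ∫ p, pd1 (fun p => ζ p * regLog δ p) p * pd2 (fun p => θ p * saddle δ p) p =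
      ∫ p, 4 * saddle δ p ^ 2 / (sqNorm p + δ ^ 2) * θ p := by
  have hu : IsTest fun p => ζ p * regLog δ p := hζ.mul_contDiff (contDiff_regLog hδ)
  rw [integral_mul_pd2_eq_neg (isTest_pd1 hu).contDiff_one
    (hθ.mul_contDiff (contDiff_saddle hδ)), ← integral_neg]
  congr 1 with p
  by_cases hp : θ p = 0
  · simp [hp]
  have near : (fun p => ζ p * regLog δ p) =ᶠ[nhds p] regLog δ :=
    Filter.eventuallyEq_of_mem (isOpen_ball.mem_nhds (hsupp hp)) fun q hq => by
      simp [hone q (ball_subset_closedBall hq)]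
  have near_pd1 : pd1 (fun p => ζ p * regLog δ p) =ᶠ[nhds p] pd1 (regLog δ) :=
    near.fderiv.fun_comp fun l : ℝ × ℝ →L[ℝ] ℝ => l (1, 0)
  have second : pd2 (pd1 fun p => ζ p * regLog δ p) p = pd2 (pd1 (regLog δ)) p := by
    rw [pd2, near_pd1.fderiv_eq, pd2]
  have hne := (sqNorm_add_sq_pos hδ p).ne'
  rw [second, pd2_pd1_regLog hδ, saddle]
  field_simp

end Saddle

/- Ornstein's non-inequality: `‖∂₁∂₂u‖₁` is not controlled by `‖Δu‖₁`. For `u = log |·|` the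
Laplacian is a point mass, while `∂₁∂₂u` is not integrable near the origin. -/
lemma exists_isTest_large_pairing :
    ∃ K : ℝ, ∀ M : ℝ, ∃ u φ : ℝ × ℝ → ℝ, IsTest u ∧ IsTest φ ∧
      support u ⊆ closedBall 0 1 ∧ support φ ⊆ closedBall 0 1 ∧ (∀ p, |φ p| ≤ 1) ∧
      ∫ p, |lap u p| ≤ K ∧ M ≤ ∫ p, pd1 u p * pd2 φ p := by
  obtain ⟨ζ, hζ, hζ0, hζ1, ζ_one, ζ_supp⟩ :=
    exists_isTest_eq_one (r := 1 / 2) (R := 1) (by norm_num) (by norm_num)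
  obtain ⟨θ, hθ, hθ0, hθ1, θ_one, θ_supp⟩ :=
    exists_isTest_eq_one (r := 1 / 4) (R := 3 / 8) (by norm_num) (by norm_num)
  refine ⟨(∫ p, (3 * |lap ζ p| + 16 * |pd1 ζ p| + 16 * |pd2 ζ p|)) + 4 * π ^ 2, fun M => ?_⟩
  obtain ⟨n, hn⟩ := exists_nat_ge (M / (4 / 729))
  have hδ : (0 : ℝ) < (1 / 2) ^ (n + 3) := by positivity
  have hδ1 : (1 / 2 : ℝ) ^ (n + 3) ≤ 1 := pow_le_one₀ (by norm_num) (by norm_num)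
  refine ⟨fun p => ζ p * regLog ((1 / 2) ^ (n + 3)) p, fun p => θ p * saddle ((1 / 2) ^ (n + 3)) p,
    hζ.mul_contDiff (contDiff_regLog hδ), hθ.mul_contDiff (contDiff_saddle hδ),
    (support_mul_subset_left _ _).trans ζ_supp,
    (support_mul_subset_left _ _).trans
      (θ_supp.trans (closedBall_subset_closedBall (by norm_num))), fun p => ?_,
    integral_abs_lap_mul_regLog_le hζ hζ0 hζ1 ζ_one ζ_supp hδ hδ1, ?_⟩
  · rw [abs_mul, abs_of_nonneg (hθ0 p)]
    exact mul_le_one₀ (hθ1 p) (abs_nonneg _) (abs_saddle_le_one hδ p)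
  · rw [integral_pd1_regLog_mul_pd2_saddle hδ hζ hθ ζ_one
      (θ_supp.trans (closedBall_subset_ball (by norm_num)))]
    exact ((div_le_iff₀ (by norm_num)).1 hn).trans
      (mul_le_integral_saddle_sq hδ le_rfl hθ hθ0 θ_one)

/-! ### A weak solution which is not weakly differentiable -/

/-- Compactly supported weak solutions of `Δf = ∂₁F` with `f` continuous and `F` integrable. -/
structure IsCompactWeakSolution (f F : ℝ × ℝ → ℝ) : Prop where
  continuous : Continuous f
  hasCompactSupport : HasCompactSupport f
  measurable_source : Measurable F
  integrable_source : Integrable F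
  hasCompactSupport_source : HasCompactSupport F
  integral_mul_lap : ∀ φ, IsTest φ → ∫ p, f p * lap φ p = -∫ p, F p * pd1 φ p

lemma IsCompactWeakSolution.const_mul {f F : ℝ × ℝ → ℝ} (h : IsCompactWeakSolution f F) (t : ℝ) :
    IsCompactWeakSolution (fun p => t * f p) (fun p => t * F p) where
  continuous := continuous_const.mul h.continuous
  hasCompactSupport := h.hasCompactSupport.mul_left
  measurable_source := h.measurable_source.const_mul t
  integrable_source := h.integrable_source.const_mul t
  hasCompactSupport_source := h.hasCompactSupport_source.mul_left
  integral_mul_lap φ hφ := by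
    simp only [mul_assoc, integral_const_mul, h.integral_mul_lap φ hφ, mul_neg]

section SolutionSpace

open scoped BoundedContinuousFunction

variable {R : ℝ} {f φ : ℝ × ℝ → ℝ}

/-- Lebesgue measure on the ball of radius `R`. -/
abbrev ballMeasure (R : ℝ) : Measure (ℝ × ℝ) := volume.restrict (closedBall 0 R)

instance (R : ℝ) : IsFiniteMeasure (ballMeasure R) :=
  isFiniteMeasure_restrict.2 measure_closedBall_lt_top.ne

/-- The Banach space in which weak solutions supported in the ball of radius `R` are sought: the
first component is the solution, the second one the source. It is not reducible, so that its module
structure is the one of the normed space. -/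
def SolutionPair (R : ℝ) : Type := (ℝ × ℝ →ᵇ ℝ) × Lp ℝ 1 (ballMeasure R)

namespace SolutionPair

instance : NormedAddCommGroup (SolutionPair R) :=
  inferInstanceAs (NormedAddCommGroup ((ℝ × ℝ →ᵇ ℝ) × Lp ℝ 1 (ballMeasure R)))

instance : NormedSpace ℝ (SolutionPair R) :=
  inferInstanceAs (NormedSpace ℝ ((ℝ × ℝ →ᵇ ℝ) × Lp ℝ 1 (ballMeasure R)))

instance : CompleteSpace (SolutionPair R) :=
  inferInstanceAs (CompleteSpace ((ℝ × ℝ →ᵇ ℝ) × Lp ℝ 1 (ballMeasure R)))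

/-- The solution component of a pair. -/
def solution : SolutionPair R →L[ℝ] (ℝ × ℝ →ᵇ ℝ) := ContinuousLinearMap.fst ℝ _ _

/-- The source component of a pair. -/
def source : SolutionPair R →L[ℝ] Lp ℝ 1 (ballMeasure R) := ContinuousLinearMap.snd ℝ _ _

end SolutionPair

open SolutionPair

lemma integral_ballMeasure_mul (hf : support f ⊆ closedBall 0 R) (g : ℝ × ℝ → ℝ) :
    ∫ p, f p * g p ∂ballMeasure R = ∫ p, f p * g p :=
  setIntegral_eq_integral_of_forall_compl_eq_zero fun p hp => by
    rw [notMem_support.1 fun h => hp (hf h), zero_mul]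

/-- The functional `F ↦ ∫ F φ` on the `L¹` space of the ball of radius `R`. -/
def testPairing (R : ℝ) (hφ : IsTest φ) : Lp ℝ 1 (ballMeasure R) →L[ℝ] ℝ :=
  (ContinuousLinearMap.mul ℝ ℝ).lpPairing (ballMeasure R) ⊤ 1
    ((hφ.continuous.memLp_top_of_hasCompactSupport hφ.2 _).toLp φ)

lemma testPairing_apply (hφ : IsTest φ) (F : Lp ℝ 1 (ballMeasure R)) :
    testPairing R hφ F = ∫ p, F p * φ p ∂ballMeasure R := by
  rw [testPairing, ContinuousLinearMap.lpPairing_eq_integral]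
  refine integral_congr_ae ?_
  filter_upwards [(hφ.continuous.memLp_top_of_hasCompactSupport hφ.2 (ballMeasure R)).coeFn_toLp]
    with p hp
  rw [hp, ContinuousLinearMap.mul_apply', mul_comm]

/-- Integration of the solution component against a test function over the ball of radius `R`. -/
def solutionPairing (R : ℝ) (hφ : IsTest φ) : SolutionPair R →L[ℝ] ℝ :=
  testPairing R hφ ∘L BoundedContinuousFunction.toLp 1 (ballMeasure R) ℝ ∘L solution

lemma solutionPairing_apply (hφ : IsTest φ) (x : SolutionPair R) :
    solutionPairing R hφ x = ∫ p, solution x p * φ p ∂ballMeasure R := by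
  simp only [solutionPairing, ContinuousLinearMap.comp_apply, testPairing_apply]
  refine integral_congr_ae ?_
  filter_upwards [(solution x).coeFn_toLp (p := 1) (𝕜 := ℝ) (ballMeasure R)] with p hp
  rw [hp]

/-- The closed subspace of pairs `(f, F)` with `f` supported in the ball of radius `R` and
`Δf = ∂₁F` weakly. -/
def weakSolutions (R : ℝ) : Submodule ℝ (SolutionPair R) :=
  (⨅ p : ↥(closedBall (0 : ℝ × ℝ) R)ᶜ,
    (BoundedContinuousFunction.evalCLM ℝ (p : ℝ × ℝ) ∘L solution).ker) ⊓
  ⨅ φ : {φ // IsTest φ},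
    (solutionPairing R (isTest_lap φ.2) + testPairing R (isTest_pd1 φ.2) ∘L source).ker

lemma isClosed_weakSolutions : IsClosed (weakSolutions R : Set (SolutionPair R)) := by
  simp only [weakSolutions, Submodule.coe_inf, Submodule.coe_iInf]
  exact (isClosed_iInter fun _ => ContinuousLinearMap.isClosed_ker _).inter
    (isClosed_iInter fun _ => ContinuousLinearMap.isClosed_ker _)

lemma mem_weakSolutions {x : SolutionPair R} : x ∈ weakSolutions R ↔
    support (solution x) ⊆ closedBall 0 R ∧ ∀ φ, IsTest φ →
      ∫ p, solution x p * lap φ p ∂ballMeasure R = -∫ p, source x p * pd1 φ p ∂ballMeasure R := by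
  simp only [weakSolutions, Submodule.mem_inf, Submodule.mem_iInf, LinearMap.mem_ker,
    ContinuousLinearMap.coe_coe, add_apply, solutionPairing_apply,
    ContinuousLinearMap.comp_apply, testPairing_apply, add_eq_zero_iff_eq_neg, Subtype.forall,
    support_subset_iff']
  rfl

lemma isCompactWeakSolution_of_mem {x : SolutionPair R} (hx : x ∈ weakSolutions R) :
    IsCompactWeakSolution (solution x) ((closedBall 0 R).indicator (source x)) := by
  obtain ⟨support_solution, weak⟩ := mem_weakSolutions.1 hx
  have hB : MeasurableSet (closedBall (0 : ℝ × ℝ) R) := isClosed_closedBall.measurableSet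
  have compactSupport {g : ℝ × ℝ → ℝ} (hg : support g ⊆ closedBall 0 R) : HasCompactSupport g :=
    .of_support_subset_isCompact (isCompact_closedBall 0 R) hg
  refine ⟨(solution x).continuous, compactSupport support_solution,
    (Lp.stronglyMeasurable (source x)).measurable.indicator hB,
    (integrable_indicator_iff hB).2 (L1.integrable_coeFn (source x)),
    compactSupport support_indicator_subset, fun φ hφ => ?_⟩
  rw [← integral_ballMeasure_mul support_solution, weak φ hφ, ← integral_indicator hB]
  simp only [indicator_mul_left]

lemma exists_mem_weakSolutions {U : ℝ × ℝ → ℝ} (hU : IsTest U) (sU : support U ⊆ closedBall 0 R)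
    (bU : ∀ p, |pd1 U p| ≤ 1) :
    ∃ x ∈ weakSolutions R, ‖x‖ ≤ max 1 (∫ p, |lap U p|) ∧ ⇑(solution x) = pd1 U := by
  have int_lap : Integrable (lap U) (ballMeasure R) := (isTest_lap hU).integrable.restrict
  have support_pd1 : support (pd1 U) ⊆ closedBall 0 R :=
    support_fderiv_apply_subset isClosed_closedBall sU _
  refine ⟨(.ofNormedAddCommGroup (pd1 U) (isTest_pd1 hU).continuous 1 bU, int_lap.toL1 (lap U)),
    mem_weakSolutions.2 ⟨support_pd1, fun φ hφ => ?_⟩, ?_, rfl⟩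
  · calc ∫ p, pd1 U p * lap φ p ∂ballMeasure R = -∫ p, lap U p * pd1 φ p := by
          rw [integral_ballMeasure_mul support_pd1, integral_pd1_mul_lap hU hφ]
      _ = -∫ p, lap U p * pd1 φ p ∂ballMeasure R := by
          rw [integral_ballMeasure_mul (support_lap_subset isClosed_closedBall sU)]
      _ = -∫ p, int_lap.toL1 (lap U) p * pd1 φ p ∂ballMeasure R := by
          refine congrArg _ (integral_congr_ae ?_)
          filter_upwards [int_lap.coeFn_toL1] with p hp
          rw [hp]
  · refine max_le_max (BoundedContinuousFunction.norm_ofNormedAddCommGroup_le _ zero_le_one bU) ?_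
    rw [L1.norm_of_fun_eq_integral_norm]
    exact setIntegral_le_integral (isTest_lap hU).integrable.norm
      (.of_forall fun _ => norm_nonneg _)

lemma exists_isCompactWeakSolution_unbounded_pairing :
    ∃ f F, IsCompactWeakSolution f F ∧ ∀ C, ∃ Φ, IsTest Φ ∧ support Φ ⊆ closedBall 0 4 ∧
      (∀ p, |Φ p| ≤ 1) ∧ C < |∫ p, f p * pd2 Φ p| := by
  obtain ⟨K, large_pairing⟩ := exists_isTest_large_pairing
  let ι := {Φ : ℝ × ℝ → ℝ // IsTest Φ ∧ support Φ ⊆ closedBall 0 4 ∧ ∀ p, |Φ p| ≤ 1}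
  let pairing (Φ : ι) : weakSolutions 4 →L[ℝ] ℝ :=
    solutionPairing 4 (isTest_pd2 Φ.2.1) ∘L (weakSolutions 4).subtypeL
  have pairing_apply (Φ : ι) (x : weakSolutions 4) :
      pairing Φ x = ∫ p, solution x.1 p * pd2 Φ.1 p :=
    (solutionPairing_apply (isTest_pd2 Φ.2.1) x.1).trans
      (integral_ballMeasure_mul (mem_weakSolutions.1 x.2).1 _)
  by_contra! H
  have pointwise_bounded (x : weakSolutions 4) : ∃ C, ∀ Φ, ‖pairing Φ x‖ ≤ C := by
    obtain ⟨C, hC⟩ := H _ _ (isCompactWeakSolution_of_mem x.2)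
    exact ⟨C, fun Φ => pairing_apply Φ x ▸ hC Φ.1 Φ.2.1 Φ.2.2.1 Φ.2.2.2⟩
  have : CompleteSpace (weakSolutions 4) := isClosed_weakSolutions.completeSpace_coe
  obtain ⟨C, hC⟩ := banach_steinhaus pointwise_bounded
  obtain ⟨u, φ, hu, hφ, su, sφ, bφ, lap_le, le_pairing⟩ := large_pairing (|C| * max 1 K + 1)
  obtain ⟨U, Φ, hU, hΦ, sU, sΦ, bU, bΦ, lap_eq, pairing_eq⟩ :=
    exists_isTest_abs_pd1_le_one hu hφ su sφ bφ
  obtain ⟨x, hx, norm_x, solution_x⟩ := exists_mem_weakSolutions hU sU bU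
  have norm_x_le : ‖x‖ ≤ max 1 K := norm_x.trans (max_le_max_left 1 (lap_eq.trans_le lap_le))
  let Φ' : ι := ⟨Φ, hΦ, sΦ, bΦ⟩
  have : |C| * max 1 K + 1 ≤ |C| * max 1 K :=
    calc |C| * max 1 K + 1 ≤ ∫ p, pd1 U p * pd2 Φ p := pairing_eq ▸ le_pairing
      _ = pairing Φ' ⟨x, hx⟩ := by rw [pairing_apply, solution_x]
      _ ≤ ‖pairing Φ'‖ * ‖x‖ := (le_abs_self _).trans ((pairing Φ').le_opNorm ⟨x, hx⟩)
      _ ≤ |C| * max 1 K := by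
        gcongr
        exact (hC _).trans (le_abs_self C)
  linarith

end SolutionSpace

section Sobolev

variable {f g : ℝ × ℝ → ℝ}

lemma MemW11.sub (hf : MemW11 f) (hg : MemW11 g) : MemW11 (fun p => f p - g p) := by
  obtain ⟨int_f, f₁, f₂, int_f₁, int_f₂, weak_f₁, weak_f₂⟩ := hf
  obtain ⟨int_g, g₁, g₂, int_g₁, int_g₂, weak_g₁, weak_g₂⟩ := hg
  refine ⟨int_f.sub int_g, fun p => f₁ p - g₁ p, fun p => f₂ p - g₂ p, int_f₁.sub int_g₁,
    int_f₂.sub int_g₂, fun φ hφ => ?_, fun φ hφ => ?_⟩ <;> simp only [sub_mul]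
  · rw [integral_sub (hφ.integrable_mul int_f₁) (hφ.integrable_mul int_g₁),
      integral_sub ((isTest_pd1 hφ).integrable_mul int_f) ((isTest_pd1 hφ).integrable_mul int_g),
      weak_f₁ φ hφ, weak_g₁ φ hφ, neg_sub_neg, neg_sub]
  · rw [integral_sub (hφ.integrable_mul int_f₂) (hφ.integrable_mul int_g₂),
      integral_sub ((isTest_pd2 hφ).integrable_mul int_f) ((isTest_pd2 hφ).integrable_mul int_g),
      weak_f₂ φ hφ, weak_g₂ φ hφ, neg_sub_neg, neg_sub]

lemma MemW11.const_mul (hf : MemW11 f) (c : ℝ) : MemW11 (fun p => c * f p) := by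
  obtain ⟨int_f, f₁, f₂, int_f₁, int_f₂, weak_f₁, weak_f₂⟩ := hf
  refine ⟨int_f.const_mul c, fun p => c * f₁ p, fun p => c * f₂ p, int_f₁.const_mul c,
    int_f₂.const_mul c, fun φ hφ => ?_, fun φ hφ => ?_⟩ <;>
    simp only [mul_assoc, integral_const_mul]
  · rw [weak_f₁ φ hφ, mul_neg]
  · rw [weak_f₂ φ hφ, mul_neg]

lemma memW11_of_contDiff_of_hasCompactSupport (hf : ContDiff ℝ 1 f) (hs : HasCompactSupport f) :
    MemW11 f := by
  refine ⟨hf.continuous.integrable_of_hasCompactSupport hs, pd1 f, pd2 f,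
    (contDiff_pd1 (n := 0) hf).continuous.integrable_of_hasCompactSupport (hs.fderiv_apply ℝ _),
    (contDiff_pd2 (n := 0) hf).continuous.integrable_of_hasCompactSupport (hs.fderiv_apply ℝ _),
    fun φ hφ => ?_, fun φ hφ => ?_⟩
  · rw [integral_mul_pd1_eq_neg hf hφ, neg_neg]
  · rw [integral_mul_pd2_eq_neg hf hφ, neg_neg]

lemma memW11loc_of_contDiff (hf : ContDiff ℝ 1 f) : MemW11loc f := fun _ hζ =>
  memW11_of_contDiff_of_hasCompactSupport (hζ.contDiff_one.mul hf) hζ.2.mul_right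

lemma MemW11loc.sub (hf : MemW11loc f) (hg : MemW11loc g) : MemW11loc (fun p => f p - g p) :=
  fun ζ hζ => by simpa only [mul_sub] using (hf ζ hζ).sub (hg ζ hζ)

lemma MemW11loc.const_mul (hf : MemW11loc f) (c : ℝ) : MemW11loc (fun p => c * f p) :=
  fun ζ hζ => by simpa only [mul_left_comm] using (hf ζ hζ).const_mul c

lemma MemW11loc.exists_abs_integral_mul_pd2_le (hf : MemW11loc f) {R : ℝ} (hR : 0 < R) :
    ∃ C, ∀ Φ, IsTest Φ → support Φ ⊆ closedBall 0 R → (∀ p, |Φ p| ≤ 1) →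
      |∫ p, f p * pd2 Φ p| ≤ C := by
  obtain ⟨ζ, hζ, -, -, ζ_eq_one, -⟩ := exists_isTest_eq_one hR (lt_add_one R)
  obtain ⟨-, -, g₂, -, int_g₂, -, weak_g₂⟩ := hf ζ hζ
  refine ⟨∫ p, |g₂ p|, fun Φ hΦ sΦ bΦ => ?_⟩
  have cutoff (p : ℝ × ℝ) : f p * pd2 Φ p = ζ p * f p * pd2 Φ p := by
    by_cases hp : p ∈ closedBall 0 R
    · rw [ζ_eq_one p hp, one_mul]
    · have : pd2 Φ p = 0 :=
        notMem_support.1 fun h => hp (support_fderiv_apply_subset isClosed_closedBall sΦ _ h)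
      rw [this, mul_zero, mul_zero]
  calc |∫ p, f p * pd2 Φ p| = |∫ p, g₂ p * Φ p| := by
        rw [weak_g₂ Φ hΦ, abs_neg]
        simp only [cutoff]
    _ ≤ ∫ p, |g₂ p| := by
        refine (abs_integral_le_integral_abs).trans
          (integral_mono (hΦ.integrable_mul int_g₂).abs int_g₂.abs fun p => ?_)
        simpa only [abs_mul] using mul_le_of_le_one_right (abs_nonneg _) (bΦ p)

end Sobolev

lemma exists_isCompactWeakSolution_not_memW11loc :
    ∃ f F, IsCompactWeakSolution f F ∧ ¬ MemW11loc f := by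
  obtain ⟨f, F, hfF, unbounded⟩ := exists_isCompactWeakSolution_unbounded_pairing
  refine ⟨f, F, hfF, fun hf => ?_⟩
  obtain ⟨C, hC⟩ := hf.exists_abs_integral_mul_pd2_le four_pos
  obtain ⟨Φ, hΦ, sΦ, bΦ, lt_pairing⟩ := unbounded C
  exact (hC Φ hΦ sΦ bΦ).not_gt lt_pairing

/-! ### The Gaussian density -/

section Magnitude

variable {w : ℝ × ℝ → ℝ × ℝ}

lemma continuous_emag : Continuous emag := by unfold emag; fun_prop

lemma emag_nonneg (w : ℝ × ℝ) : 0 ≤ emag w := sqrt_nonneg _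

lemma emag_le_two_mul_norm (w : ℝ × ℝ) : emag w ≤ 2 * ‖w‖ := by
  have h₁ : |w.1| ≤ ‖w‖ := norm_fst_le w
  have h₂ : |w.2| ≤ ‖w‖ := norm_snd_le w
  refine sqrt_le_iff.2 ⟨by positivity, ?_⟩
  nlinarith [sq_abs w.1, sq_abs w.2, abs_nonneg w.1, abs_nonneg w.2]

lemma emag_smul_of_nonneg {c : ℝ} (hc : 0 ≤ c) (w : ℝ × ℝ) : emag (c • w) = emag w * c := by
  have : (c * w.1) ^ 2 + (c * w.2) ^ 2 = (w.1 ^ 2 + w.2 ^ 2) * c ^ 2 := by ring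
  simp only [emag, Prod.smul_fst, Prod.smul_snd, smul_eq_mul]
  rw [this, sqrt_mul' _ (sq_nonneg c), sqrt_sq hc]

lemma integrable_emag_comp (hw : Integrable w) : Integrable (fun p => emag (w p)) := by
  refine (hw.norm.const_mul 2).mono' (continuous_emag.comp_aestronglyMeasurable hw.1)
    (.of_forall fun p => ?_)
  simpa only [norm_of_nonneg (emag_nonneg _)] using emag_le_two_mul_norm (w p)

lemma integrable_continuous_smul {h : ℝ × ℝ → ℝ} (hh : Continuous h) (hw : Integrable w)
    (sw : HasCompactSupport w) : Integrable (fun p => h p • w p) :=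
  (integrableOn_iff_integrable_of_support_subset
    ((support_smul_subset_right _ _).trans (subset_tsupport w))).1
    (hw.integrableOn.continuousOn_smul hh.continuousOn sw)

end Magnitude

section Gaussian

open ProbabilityTheory

lemma contDiff_gauss2 {n : WithTop ℕ∞} : ContDiff ℝ n gauss2 := by unfold gauss2; fun_prop

lemma pd1_gauss2 (p : ℝ × ℝ) : pd1 gauss2 p = -p.1 * gauss2 p := by
  refine pd1_eq_of_hasDerivAt ((contDiff_gauss2 (n := 1)).differentiable one_ne_zero p) ?_
  refine (((((hasDerivAt_id p.1).pow 2).add_const (p.2 ^ 2)).neg.div_const 2).exp.const_mul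
    (2 * π)⁻¹).congr_deriv ?_
  simp only [gauss2, id_eq, Pi.pow_apply, Pi.neg_apply]
  ring

lemma pd2_gauss2 (p : ℝ × ℝ) : pd2 gauss2 p = -p.2 * gauss2 p := by
  refine pd2_eq_of_hasDerivAt ((contDiff_gauss2 (n := 1)).differentiable one_ne_zero p) ?_
  refine (((((hasDerivAt_id p.2).pow 2).const_add (p.1 ^ 2)).neg.div_const 2).exp.const_mul
    (2 * π)⁻¹).congr_deriv ?_
  simp only [gauss2, id_eq, Pi.pow_apply, Pi.neg_apply]
  ring

lemma gauss2_pos (p : ℝ × ℝ) : 0 < gauss2 p := by unfold gauss2; positivity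

lemma gauss2_eq_gaussianPDFReal_mul :
    gauss2 = fun p => gaussianPDFReal 0 1 p.1 * gaussianPDFReal 0 1 p.2 := by
  funext p
  simp only [gauss2, gaussianPDFReal, NNReal.coe_one, mul_one, sub_zero]
  rw [mul_mul_mul_comm, ← mul_inv, mul_self_sqrt (by positivity), ← exp_add]
  ring_nf

lemma integrable_gauss2 : Integrable gauss2 := by
  rw [gauss2_eq_gaussianPDFReal_mul]
  exact (integrable_gaussianPDFReal 0 1).mul_prod (integrable_gaussianPDFReal 0 1)

lemma integral_gauss2 : ∫ p, gauss2 p = 1 := by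
  rw [gauss2_eq_gaussianPDFReal_mul]
  exact (integral_prod_mul _ _).trans
    (by rw [integral_gaussianPDFReal_eq_one 0 one_ne_zero, one_mul])

lemma integrable_gaussianPDFReal_mul_id : Integrable (fun x => gaussianPDFReal 0 1 x * x) := by
  refine ((integrable_mul_exp_neg_mul_sq one_half_pos).const_mul (√(2 * π))⁻¹).congr
    (.of_forall fun x => ?_)
  simp only [gaussianPDFReal, NNReal.coe_one, mul_one, sub_zero]
  ring_nf

lemma integrable_gauss2_smul_id : Integrable (fun p => gauss2 p • p) := by
  simp only [gauss2_eq_gaussianPDFReal_mul]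
  refine Integrable.congr (f := fun p : ℝ × ℝ =>
    (gaussianPDFReal 0 1 p.1 * p.1 * gaussianPDFReal 0 1 p.2,
      gaussianPDFReal 0 1 p.1 * (gaussianPDFReal 0 1 p.2 * p.2))) ?_ (.of_forall fun p => ?_)
  · exact (integrable_gaussianPDFReal_mul_id.mul_prod (integrable_gaussianPDFReal 0 1)).prodMk
      ((integrable_gaussianPDFReal 0 1).mul_prod integrable_gaussianPDFReal_mul_id)
  · ext <;> simp only [Prod.smul_fst, Prod.smul_snd, smul_eq_mul] <;> ring

lemma integrable_emag_mul_gauss2 : Integrable (fun p => emag p * gauss2 p) := by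
  simpa only [emag_smul_of_nonneg (gauss2_pos _).le] using
    integrable_emag_comp integrable_gauss2_smul_id

/-- The generator `φ ↦ Δφ - ⟨x, ∇φ⟩` of the Ornstein–Uhlenbeck semigroup, whose invariant measure
is the standard Gaussian. -/
def ornsteinUhlenbeck (φ : ℝ × ℝ → ℝ) (p : ℝ × ℝ) : ℝ := lap φ p - fderiv ℝ φ p p

variable {φ : ℝ × ℝ → ℝ}

lemma gauss2_mul_ornsteinUhlenbeck (φ : ℝ × ℝ → ℝ) (p : ℝ × ℝ) :
    gauss2 p * ornsteinUhlenbeck φ p =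
      gauss2 p * lap φ p + (pd1 gauss2 p * pd1 φ p + pd2 gauss2 p * pd2 φ p) := by
  rw [ornsteinUhlenbeck, fderiv_apply_eq, pd1_gauss2, pd2_gauss2]
  ring

lemma integrable_gradient_gauss2_mul_gradient (h : IsTest φ) :
    Integrable (fun p => pd1 gauss2 p * pd1 φ p + pd2 gauss2 p * pd2 φ p) :=
  ((isTest_pd1 h).integrable_continuous_mul
      (contDiff_pd1 (n := 0) contDiff_gauss2).continuous).add
    ((isTest_pd2 h).integrable_continuous_mul (contDiff_pd2 (n := 0) contDiff_gauss2).continuous)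

lemma integrable_gauss2_mul_ornsteinUhlenbeck (h : IsTest φ) :
    Integrable (fun p => gauss2 p * ornsteinUhlenbeck φ p) := by
  simp only [gauss2_mul_ornsteinUhlenbeck]
  exact ((isTest_lap h).integrable_mul integrable_gauss2).add
    (integrable_gradient_gauss2_mul_gradient h)

lemma integral_gauss2_mul_ornsteinUhlenbeck (h : IsTest φ) :
    ∫ p, gauss2 p * ornsteinUhlenbeck φ p = 0 := by
  simp only [gauss2_mul_ornsteinUhlenbeck]
  rw [integral_add ((isTest_lap h).integrable_mul integrable_gauss2)
    (integrable_gradient_gauss2_mul_gradient h), integral_mul_lap_eq_neg_gradient contDiff_gauss2 h,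
    neg_add_cancel]

end Gaussian

/-! ### Perturbation of the Gaussian density -/

lemma exists_pos_forall_add_mul_pos {X : Type*} [TopologicalSpace X] {g f : X → ℝ}
    (cg : Continuous g) (hg : ∀ x, 0 < g x) (cf : Continuous f) (hf : HasCompactSupport f) :
    ∃ t > 0, ∀ x, 0 < g x + t * f x := by
  obtain ⟨C, hC⟩ := (hf.mul_left (f := fun x => (g x)⁻¹)).exists_bound_of_continuous
    ((cg.inv₀ fun x => (hg x).ne').mul cf)
  have hC' : 0 < |C| + 1 := by positivity
  refine ⟨(|C| + 1)⁻¹, inv_pos.2 hC', fun x => ?_⟩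
  have ratio : |(|C| + 1)⁻¹ * ((g x)⁻¹ * f x)| < 1 := by
    rw [abs_mul, abs_of_pos (inv_pos.2 hC'), inv_mul_lt_iff₀ hC', mul_one]
    exact ((hC x).trans (le_abs_self C)).trans_lt (lt_add_one _)
  have factor : g x + (|C| + 1)⁻¹ * f x = g x * (1 + (|C| + 1)⁻¹ * ((g x)⁻¹ * f x)) := by
    have := (hg x).ne'
    field_simp
  rw [factor]
  exact mul_pos (hg x) (by linarith [(abs_lt.1 ratio).1])

lemma pd1_half_sq_snd (p : ℝ × ℝ) : pd1 (fun p => p.2 ^ 2 / 2) p = 0 :=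
  pd1_eq_of_hasDerivAt (by fun_prop) (hasDerivAt_const p.1 (p.2 ^ 2 / 2))

lemma pd2_half_sq_snd (p : ℝ × ℝ) : pd2 (fun p => p.2 ^ 2 / 2) p = p.2 :=
  pd2_eq_of_hasDerivAt (by fun_prop)
    ((((hasDerivAt_id p.2).pow 2).div_const 2).congr_deriv (by simp))

lemma lap_half_sq_snd (p : ℝ × ℝ) : lap (fun p => p.2 ^ 2 / 2) p = 1 := by
  rw [lap, funext pd1_half_sq_snd, funext pd2_half_sq_snd,
    pd1_eq_of_hasDerivAt (differentiableAt_const 0) (hasDerivAt_const _ 0),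
    pd2_eq_of_hasDerivAt differentiableAt_snd (hasDerivAt_id _), zero_add]

/-- The vector field `f x + F e₁`, equal to the perturbation of the drift times the perturbed
density. -/
def perturbationFlux (f F : ℝ × ℝ → ℝ) (p : ℝ × ℝ) : ℝ × ℝ := f p • p + (F p, 0)

/-- The perturbation `v` of the drift `-x` for which `gauss2 + f` solves the
Fokker–Planck–Kolmogorov equation when `Δf = ∂₁F`. -/
def driftPerturbation (f F : ℝ × ℝ → ℝ) (p : ℝ × ℝ) : ℝ × ℝ :=
  (gauss2 p + f p)⁻¹ • perturbationFlux f F p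

namespace IsCompactWeakSolution

variable {f F : ℝ × ℝ → ℝ}

lemma integrable (h : IsCompactWeakSolution f F) : Integrable f :=
  h.continuous.integrable_of_hasCompactSupport h.hasCompactSupport

lemma exists_support_subset_closedBall (h : IsCompactWeakSolution f F) :
    ∃ R > 0, support f ⊆ closedBall 0 R ∧ support F ⊆ closedBall 0 R := by
  obtain ⟨R, R_pos, hR⟩ := (h.hasCompactSupport.isBounded.union
    h.hasCompactSupport_source.isBounded).subset_closedBall_lt 0 0
  have ⟨hf, hF⟩ := union_subset_iff.1 hR
  exact ⟨R, R_pos, (subset_tsupport f).trans hf, (subset_tsupport F).trans hF⟩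

lemma exists_eq_zero_of_le_emag (h : IsCompactWeakSolution f F) :
    ∃ R, ∀ p, R ≤ emag p → f p = 0 := by
  obtain ⟨R, -, sf, -⟩ := h.exists_support_subset_closedBall
  refine ⟨2 * R + 1, fun p hp => notMem_support.1 fun hfp => ?_⟩
  linarith [emag_le_two_mul_norm p, mem_closedBall_zero_iff.1 (sf hfp)]

/- Tested against `x₂²/2` the equation reads `∫ f = 0`, since `Δ(x₂²/2) = 1` and
`∂₁(x₂²/2) = 0`. -/
lemma integral_eq_zero (h : IsCompactWeakSolution f F) : ∫ p, f p = 0 := by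
  obtain ⟨R, R_pos, sf, sF⟩ := h.exists_support_subset_closedBall
  obtain ⟨ζ, hζ, -, -, ζ_eq_one, -⟩ :=
    exists_isTest_eq_one (add_pos R_pos one_pos) (lt_add_one (R + 1))
  have hφ : IsTest (fun p => ζ p * (p.2 ^ 2 / 2)) := hζ.mul_contDiff (by fun_prop)
  have cutoff {p : ℝ × ℝ} (hp : p ∈ closedBall 0 R) :
      (fun p => ζ p * (p.2 ^ 2 / 2)) =ᶠ[𝓝 p] fun p => p.2 ^ 2 / 2 := by
    filter_upwards [isOpen_ball.mem_nhds (closedBall_subset_ball (lt_add_one R) hp)] with q hq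
    rw [ζ_eq_one q (ball_subset_closedBall hq), one_mul]
  have f_mul_lap (p : ℝ × ℝ) : f p * lap (fun p => ζ p * (p.2 ^ 2 / 2)) p = f p := by
    by_cases hp : f p = 0
    · rw [hp, zero_mul]
    · rw [lap_eq_of_eventuallyEq (cutoff (sf hp)), lap_half_sq_snd, mul_one]
  have F_mul_pd1 (p : ℝ × ℝ) : F p * pd1 (fun p => ζ p * (p.2 ^ 2 / 2)) p = 0 := by
    by_cases hp : F p = 0
    · rw [hp, zero_mul]
    · rw [(pd1_eventuallyEq (cutoff (sF hp))).eq_of_nhds, pd1_half_sq_snd, mul_zero]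
  simpa only [f_mul_lap, F_mul_pd1, integral_zero, neg_zero] using h.integral_mul_lap _ hφ

lemma integral_gauss2_add (h : IsCompactWeakSolution f F) : ∫ p, (gauss2 p + f p) = 1 := by
  rw [integral_add integrable_gauss2 h.integrable, integral_gauss2, h.integral_eq_zero, add_zero]

lemma continuous_gauss2_add (h : IsCompactWeakSolution f F) :
    Continuous (fun p => gauss2 p + f p) :=
  (contDiff_gauss2 (n := 0)).continuous.add h.continuous

lemma integrable_emag_mul_gauss2_add (h : IsCompactWeakSolution f F) :
    Integrable (fun p => emag p * (gauss2 p + f p)) := by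
  simp only [mul_add]
  exact integrable_emag_mul_gauss2.add ((continuous_emag.mul
    h.continuous).integrable_of_hasCompactSupport h.hasCompactSupport.mul_left)

lemma integrable_perturbationFlux (h : IsCompactWeakSolution f F) :
    Integrable (perturbationFlux f F) :=
  ((h.continuous.smul continuous_id).integrable_of_hasCompactSupport
    h.hasCompactSupport.smul_right).add (h.integrable_source.prodMk (integrable_zero _ _ _))

lemma hasCompactSupport_perturbationFlux (h : IsCompactWeakSolution f F) :
    HasCompactSupport (perturbationFlux f F) :=
  h.hasCompactSupport.smul_right.add
    (h.hasCompactSupport_source.comp_left (g := fun s : ℝ => (s, (0 : ℝ))) rfl)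

lemma measurable_driftPerturbation (h : IsCompactWeakSolution f F) :
    Measurable (driftPerturbation f F) :=
  h.continuous_gauss2_add.measurable.inv.smul ((h.continuous.measurable.smul measurable_id).add
    (h.measurable_source.prodMk measurable_const))

lemma hasCompactSupport_driftPerturbation (h : IsCompactWeakSolution f F) :
    HasCompactSupport (driftPerturbation f F) :=
  h.hasCompactSupport_perturbationFlux.smul_left (f := fun p => (gauss2 p + f p)⁻¹)

lemma integrable_emag_driftPerturbation (h : IsCompactWeakSolution f F)
    (pos : ∀ p, 0 < gauss2 p + f p) : Integrable (fun p => emag (driftPerturbation f F p)) :=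
  integrable_emag_comp (integrable_continuous_smul
    (h.continuous_gauss2_add.inv₀ fun p => (pos p).ne') h.integrable_perturbationFlux
    h.hasCompactSupport_perturbationFlux)

lemma integrable_emag_driftPerturbation_mul (h : IsCompactWeakSolution f F)
    (pos : ∀ p, 0 < gauss2 p + f p) :
    Integrable (fun p => emag (driftPerturbation f F p) * (gauss2 p + f p)) := by
  simpa only [← emag_smul_of_nonneg (pos _).le, driftPerturbation, smul_inv_smul₀ (pos _).ne']
    using integrable_emag_comp h.integrable_perturbationFlux

lemma integral_fokkerPlanck_eq_zero (h : IsCompactWeakSolution f F)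
    (pos : ∀ p, 0 < gauss2 p + f p) {φ : ℝ × ℝ → ℝ} (hφ : IsTest φ) :
    ∫ p, (pd1 (pd1 φ) p + pd2 (pd2 φ) p + fderiv ℝ φ p (-p + driftPerturbation f F p)) *
      (gauss2 p + f p) = 0 := by
  have split (p : ℝ × ℝ) :
      (pd1 (pd1 φ) p + pd2 (pd2 φ) p + fderiv ℝ φ p (-p + driftPerturbation f F p)) *
        (gauss2 p + f p) =
      gauss2 p * ornsteinUhlenbeck φ p + (f p * lap φ p + F p * pd1 φ p) := by
    have flux : (gauss2 p + f p) * fderiv ℝ φ p (driftPerturbation f F p) =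
        f p * fderiv ℝ φ p p + F p * pd1 φ p := by
      rw [← smul_eq_mul, ← map_smul, driftPerturbation, smul_inv_smul₀ (pos p).ne',
        perturbationFlux, map_add, map_smul, fderiv_apply_eq φ p (F p, 0), zero_mul, add_zero,
        smul_eq_mul]
    rw [map_add, map_neg, ornsteinUhlenbeck, lap]
    linear_combination flux
  have int_f := (isTest_lap hφ).integrable_mul h.integrable
  have int_F := (isTest_pd1 hφ).integrable_mul h.integrable_source
  have int_fF : Integrable (fun p => f p * lap φ p + F p * pd1 φ p) := int_f.add int_F
  simp only [split]
  rw [integral_add (integrable_gauss2_mul_ornsteinUhlenbeck hφ) int_fF,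
    integral_gauss2_mul_ornsteinUhlenbeck hφ, integral_add int_f int_F, h.integral_mul_lap φ hφ,
    neg_add_cancel, add_zero]

end IsCompactWeakSolution

/-- There exist a compactly supported Borel vector field `v` on `ℝ²` with `|v| ∈ L¹` and a
continuous probability density `ϱ`, proportional to the standard Gaussian density outside of
some ball, such that the measure `μ = ϱ dx` solves the Fokker–Planck–Kolmogorov equation
`L_b^* μ = 0` with drift `b(x) = -x + v(x)` (i.e. `∫ [Δφ + ⟨b,∇φ⟩] ϱ dx = 0` for all test
functions `φ`), with `|x|, |v| ∈ L¹(μ)`, but `ϱ ∉ W^{1,1}_loc(ℝ²)`. -/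
theorem gaussian_perturbation_FPK_not_W11loc :
    ∃ (v : ℝ × ℝ → ℝ × ℝ) (ϱ : ℝ × ℝ → ℝ),
      Measurable v ∧ HasCompactSupport v ∧ Integrable (fun p => emag (v p)) ∧
      Continuous ϱ ∧ (∀ p, 0 ≤ ϱ p) ∧ (∫ p, ϱ p = 1) ∧
      (∃ c R : ℝ, ∀ p : ℝ × ℝ, R ≤ emag p → ϱ p = c * gauss2 p) ∧
      (∀ φ : ℝ × ℝ → ℝ, IsTest φ →
        ∫ p, (pd1 (pd1 φ) p + pd2 (pd2 φ) p + fderiv ℝ φ p (-p + v p)) * ϱ p = 0) ∧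
      Integrable (fun p => emag p * ϱ p) ∧
      Integrable (fun p => emag (v p) * ϱ p) ∧
      ¬ MemW11loc ϱ := by
  obtain ⟨f₀, F₀, h₀, hf₀⟩ := exists_isCompactWeakSolution_not_memW11loc
  obtain ⟨t, t_pos, pos⟩ := exists_pos_forall_add_mul_pos (contDiff_gauss2 (n := 0)).continuous
    gauss2_pos h₀.continuous h₀.hasCompactSupport
  let f (p : ℝ × ℝ) : ℝ := t * f₀ p
  let F (p : ℝ × ℝ) : ℝ := t * F₀ p
  have h : IsCompactWeakSolution f F := h₀.const_mul t
  obtain ⟨R, f_eq_zero⟩ := h.exists_eq_zero_of_le_emag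
  refine ⟨driftPerturbation f F, fun p => gauss2 p + f p, h.measurable_driftPerturbation,
    h.hasCompactSupport_driftPerturbation, h.integrable_emag_driftPerturbation pos,
    h.continuous_gauss2_add, fun p => (pos p).le, h.integral_gauss2_add,
    ⟨1, R, fun p hp => by simp only [f_eq_zero p hp, add_zero, one_mul]⟩,
    fun φ => h.integral_fokkerPlanck_eq_zero pos, h.integrable_emag_mul_gauss2_add,
    h.integrable_emag_driftPerturbation_mul pos, fun memW11loc_density => hf₀ ?_⟩
  have memW11loc_f : MemW11loc f := by
    simpa only [add_sub_cancel_left] using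
      memW11loc_density.sub (memW11loc_of_contDiff contDiff_gauss2)
  simpa only [f, inv_mul_cancel_left₀ t_pos.ne'] using memW11loc_f.const_mul t⁻¹
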